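/- Let g ∈ H^∞ and 0 < p < ∞. Then Γ(g) vanishes identically in the unit disk if and only if the only z-invariant subspace of H^p contained in the H^p-closure of ℂ[B,g] is the trivial subspace {0}. (A z-invariant subspace is a closed subspace M of H^p such that z·f ∈ M whenever f ∈ M.) -/

import Mathlib

open Complex Polynomial MeasureTheory Metric Set Filter Topology
open scoped Classical

noncomputable section

/-- The open unit disk in `ℂ`. -/
def uDisk : Set ℂ := Metric.ball 0 1

/-- The closed unit disk in `ℂ`. -/
def cDisk : Set ℂ := Metric.closedBall 0 1

/-- The finite Blaschke product with zero set `a 0, …, a (n-1)`: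
`B(z) = ∏_j (a_j - z)/(1 - conj(a_j)·z)`. -/
def blaschke {n : ℕ} (a : Fin n → ℂ) (z : ℂ) : ℂ :=
  ∏ j, (a j - z) / (1 - (starRingEnd ℂ) (a j) * z)

/-- The multiset of the `n` solutions (with multiplicity) `φ_0(z) = z, φ_1(z), …, φ_{n-1}(z)`
of `B(w) = B(z)`, realized as the roots of the polynomial equation
`∏_j (a_j - w) = B(z) · ∏_j (1 - conj(a_j)·w)`. -/
def fiberMS {n : ℕ} (a : Fin n → ℂ) (z : ℂ) : Multiset ℂ :=
  ((∏ j, (Polynomial.C (a j) - Polynomial.X)) -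
    Polynomial.C (blaschke a z) *
      ∏ j, (1 - Polynomial.C ((starRingEnd ℂ) (a j)) * Polynomial.X)).roots

/-- `𝒟(f)(z) = ∏_{j=1}^{n-1} (f(z) - f(φ_j(z)))`, where `φ_1(z), …, φ_{n-1}(z)` is the
fiber of `B` over `B(z)` with one copy of `z` removed.  In particular
`calD a id z = ∏_{j=1}^{n-1} (z - φ_j(z))`. -/
def calD {n : ℕ} (a : Fin n → ℂ) (f : ℂ → ℂ) (z : ℂ) : ℂ :=
  (((fiberMS a z).erase z).map (fun w => f z - f w)).prod

/-- `G` is (the holomorphic extension after removing singularities of) `Γ(f) = 𝒟(f)/𝒟`. -/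
def IsGamma {n : ℕ} (a : Fin n → ℂ) (f G : ℂ → ℂ) : Prop :=
  DifferentiableOn ℂ G uDisk ∧ ∀ z ∈ uDisk, G z * calD a id z = calD a f z

/-- `p`-th power integral mean of `f` on the circle of radius `r`. -/
def circMean (p : ℝ) (f : ℂ → ℂ) (r : ℝ) : ℝ :=
  ∫ θ in (0:ℝ)..(2 * Real.pi), ‖f ((r : ℂ) * Complex.exp ((θ : ℂ) * Complex.I))‖ ^ p

/-- The `H^p` norm of `f` (for `0 < p < ∞`). -/
def hpNorm (p : ℝ) (f : ℂ → ℂ) : ℝ :=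
  (sSup {m : ℝ | ∃ r ∈ Set.Ico (0:ℝ) 1, m = circMean p f r}) ^ (1 / p)

/-- Membership in the Hardy space `H^p`, `0 < p < ∞`: holomorphic on the disk with
uniformly bounded integral means. -/
def MemHp (p : ℝ) (f : ℂ → ℂ) : Prop :=
  DifferentiableOn ℂ f uDisk ∧ ∃ C : ℝ, ∀ r ∈ Set.Ico (0:ℝ) 1, circMean p f r ≤ C

/-- Membership in `H^∞`: bounded holomorphic functions on the disk. -/
def MemHinf (f : ℂ → ℂ) : Prop :=
  DifferentiableOn ℂ f uDisk ∧ ∃ C : ℝ, ∀ z ∈ uDisk, ‖f z‖ ≤ C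

/-- The `H^∞` (sup) norm. -/
def hinfNorm (f : ℂ → ℂ) : ℝ := sSup {m : ℝ | ∃ z ∈ uDisk, m = ‖f z‖}

/-- The algebra of all polynomials in the functions `F 0, …, F (m-1)`. -/
def algGen (m : ℕ) (F : Fin m → (ℂ → ℂ)) : Set (ℂ → ℂ) :=
  {h | ∃ P : MvPolynomial (Fin m) ℂ, ∀ z : ℂ, h z = MvPolynomial.eval (fun i => F i z) P}

/-- The algebra `ℂ[F,G]` of all polynomials in the two functions `F` and `G`. -/
def algGen2 (F G : ℂ → ℂ) : Set (ℂ → ℂ) := algGen 2 ![F, G]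

/-- The (sequential) closure of `S` in `H^p`. -/
def hpClosure (p : ℝ) (S : Set (ℂ → ℂ)) : Set (ℂ → ℂ) :=
  {f | MemHp p f ∧ ∃ u : ℕ → (ℂ → ℂ), (∀ k, u k ∈ S) ∧
    Filter.Tendsto (fun k => hpNorm p (fun z => f z - u k z)) Filter.atTop (nhds 0)}

/-- `S` has finite codimension in `H^p`: finitely many functions in `H^p` together with `S`
span all of `H^p`. -/
def FiniteCodimHp (p : ℝ) (S : Set (ℂ → ℂ)) : Prop :=
  ∃ (k : ℕ) (e : Fin k → (ℂ → ℂ)), (∀ i, MemHp p (e i)) ∧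
    ∀ f, MemHp p f → ∃ (c : Fin k → ℂ) (s : ℂ → ℂ), s ∈ S ∧
      ∀ z ∈ uDisk, f z = s z + ∑ i, c i * e i z

/-- Inner function: bounded by 1, holomorphic, radial limits of modulus 1 a.e. -/
def IsInner (f : ℂ → ℂ) : Prop :=
  DifferentiableOn ℂ f uDisk ∧ (∀ z ∈ uDisk, ‖f z‖ ≤ 1) ∧
  ∀ᵐ θ : ℝ ∂volume, ∃ l : ℂ, ‖l‖ = 1 ∧
    Filter.Tendsto (fun r : ℝ => f ((r : ℂ) * Complex.exp ((θ : ℂ) * Complex.I)))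
      (nhdsWithin 1 (Set.Iio 1)) (nhds l)

/-- `J` divides `h`, with a quotient holomorphic on the disk. -/
def InnerDivides (J h : ℂ → ℂ) : Prop :=
  ∃ k : ℂ → ℂ, DifferentiableOn ℂ k uDisk ∧ ∀ z ∈ uDisk, h z = J z * k z

/-- Outer function: a holomorphic function on the disk whose only inner divisors are
unimodular constants (i.e. whose inner part is a unimodular constant). -/
def IsOuter (h : ℂ → ℂ) : Prop :=
  DifferentiableOn ℂ h uDisk ∧
  ∀ J : ℂ → ℂ, IsInner J → InnerDivides J h →
    ∃ c : ℂ, ‖c‖ = 1 ∧ ∀ z ∈ uDisk, J z = c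

/-- `I` is the inner part of `h`: `I` is inner and `h = I·F` with `F` outer. -/
def IsInnerPartOf (I h : ℂ → ℂ) : Prop :=
  IsInner I ∧ ∃ F : ℂ → ℂ, IsOuter F ∧ ∀ z ∈ uDisk, h z = I z * F z

/-- Finite Blaschke product (up to a unimodular constant factor). -/
def IsFiniteBlaschke (f : ℂ → ℂ) : Prop :=
  ∃ (m : ℕ) (c : ℂ) (b : Fin m → ℂ), ‖c‖ = 1 ∧ (∀ i, b i ∈ uDisk) ∧
    ∀ z ∈ uDisk, f z = c * ∏ i, (b i - z) / (1 - (starRingEnd ℂ) (b i) * z)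

/-- `h` has no singular inner factor: every zero-free inner divisor of `h` is a
unimodular constant. -/
def NoSingularInnerFactor (h : ℂ → ℂ) : Prop :=
  ∀ J : ℂ → ℂ, IsInner J → (∀ z ∈ uDisk, J z ≠ 0) → InnerDivides J h →
    ∃ c : ℂ, ‖c‖ = 1 ∧ ∀ z ∈ uDisk, J z = c

/-- A `z`-invariant subspace of `H^p`: a closed subspace `M` with `z·f ∈ M` for `f ∈ M`. -/
def IsZInvSubspace (p : ℝ) (M : Set (ℂ → ℂ)) : Prop :=
  (∀ f ∈ M, MemHp p f) ∧ (fun _ => (0 : ℂ)) ∈ M ∧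
  (∀ f ∈ M, ∀ h ∈ M, (fun z => f z + h z) ∈ M) ∧
  (∀ c : ℂ, ∀ f ∈ M, (fun z => c * f z) ∈ M) ∧
  (∀ f ∈ M, (fun z => z * f z) ∈ M) ∧
  (∀ f, MemHp p f →
    (∃ u : ℕ → ℂ → ℂ, (∀ k, u k ∈ M) ∧
      Filter.Tendsto (fun k => hpNorm p (fun z => f z - u k z)) Filter.atTop (nhds 0)) →
    f ∈ M)

/-!
Write `B` for the Blaschke product and `ψ_1, …, ψ_n` for the local holomorphic branches of `B⁻¹`
over a regular value.

If `Γ(g) = 0`, then `∏_{j ≠ i} (g ∘ ψ_i - g ∘ ψ_j) = 0` near a regular value, so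
`g ∘ ψ_i = g ∘ ψ_j` for some `j ≠ i`, by analyticity. Point evaluations are continuous on
`H^p`, so every `f` in the closure of `ℂ[B,g]` satisfies `f ∘ ψ_i = f ∘ ψ_j`. If `f` lies in a
`z`-invariant subspace of the closure, the same is true of `z f`, whence
`(ψ_i - ψ_j) · f ∘ ψ_i = 0` and `f = 0`.

Conversely, for `f` in `H^∞` the polynomial `∑_ζ f(ζ) ∏_{ξ ≠ ζ} (X - g(ξ))`, where `ζ, ξ` run
through the fiber of `B` over `w`, has coefficients that are symmetric in the fiber; they are
therefore bounded holomorphic functions `c_k` of `w`, up to removable singularities at the finitely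
many critical values. Evaluating at `w = B(z)` and `X = g(z)` gives `f 𝒟(g) = ∑_{k < n} c_k(B) g^k`.
Each `c_k(B) g^k` is in the closure of `ℂ[B,g]`: since `B(0) = 0`, composition with `B` is bounded
on `H²` (Littlewood's subordination principle), so `c_k(B)` is an `H²`-limit of uniformly bounded
polynomials in `B`, and such a sequence converges in every `H^p`. Taking `f = z^m` for all `m`
shows that `𝒟(g)` belongs to `{f | ∀ m, z^m f ∈ closure}`, which is a `z`-invariant subspace. If
only the trivial invariant subspace is contained in the closure, then `𝒟(g) = 0`, and so
`Γ(g) = 0`.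
-/

/-! ### Integral means -/

section IntegralMeans

variable {p q s : ℝ} {f h k : ℂ → ℂ} {r : ℝ}

lemma mem_uDisk_of_mem_Ico (hr : r ∈ Ico (0 : ℝ) 1) (θ : ℝ) :
    (r : ℂ) * Complex.exp ((θ : ℂ) * Complex.I) ∈ uDisk := by
  simp [uDisk, Complex.norm_exp_ofReal_mul_I, abs_of_nonneg hr.1, hr.2]

lemma zero_mem_uDisk : (0 : ℂ) ∈ uDisk := mem_ball_self one_pos

lemma continuous_norm_rpow_circle (hp : 0 < p) (hf : ContinuousOn f uDisk)
    (hr : r ∈ Ico (0 : ℝ) 1) :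
    Continuous fun θ : ℝ => ‖f ((r : ℂ) * Complex.exp ((θ : ℂ) * Complex.I))‖ ^ p :=
  (hf.comp_continuous (by fun_prop) (mem_uDisk_of_mem_Ico hr)).norm.rpow_const
    fun _ => Or.inr hp.le

lemma circMean_nonneg (p : ℝ) (f : ℂ → ℂ) (r : ℝ) : 0 ≤ circMean p f r :=
  intervalIntegral.integral_nonneg (by positivity) fun _ _ => by positivity

lemma circMean_congr (hfh : EqOn f h uDisk) (hr : r ∈ Ico (0 : ℝ) 1) :
    circMean p f r = circMean p h r := by
  simp only [circMean, hfh (mem_uDisk_of_mem_Ico hr _)]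

lemma circMean_const (c : ℂ) (r : ℝ) : circMean p (fun _ => c) r = 2 * Real.pi * ‖c‖ ^ p := by
  simp [circMean]

lemma circMean_le_of_norm_rpow_le (hp : 0 < p) (hq : 0 < q) (hs : 0 < s)
    (hf : ContinuousOn f uDisk) (hh : ContinuousOn h uDisk) (hk : ContinuousOn k uDisk) {α β : ℝ}
    (hle : ∀ z ∈ uDisk, ‖f z‖ ^ p ≤ α * ‖h z‖ ^ q + β * ‖k z‖ ^ s) (hr : r ∈ Ico (0 : ℝ) 1) :
    circMean p f r ≤ α * circMean q h r + β * circMean s k r := by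
  have intf := (continuous_norm_rpow_circle hp hf hr).intervalIntegrable (μ := volume) 0
    (2 * Real.pi)
  have inth := (continuous_norm_rpow_circle hq hh hr).intervalIntegrable (μ := volume) 0
    (2 * Real.pi)
  have intk := (continuous_norm_rpow_circle hs hk hr).intervalIntegrable (μ := volume) 0
    (2 * Real.pi)
  unfold circMean
  rw [← intervalIntegral.integral_const_mul, ← intervalIntegral.integral_const_mul,
    ← intervalIntegral.integral_add (inth.const_mul _) (intk.const_mul _)]
  exact intervalIntegral.integral_mono (by positivity) intf
    ((inth.const_mul _).add (intk.const_mul _)) fun θ => hle _ (mem_uDisk_of_mem_Ico hr θ)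

lemma norm_add_rpow_le (hp : 0 ≤ p) (x y : ℂ) :
    ‖x + y‖ ^ p ≤ 2 ^ p * ‖x‖ ^ p + 2 ^ p * ‖y‖ ^ p := by
  wlog hxy : ‖x‖ ≤ ‖y‖ generalizing x y
  · rw [add_comm x, add_comm (2 ^ p * ‖x‖ ^ p)]
    exact this y x (le_of_not_ge hxy)
  calc ‖x + y‖ ^ p ≤ (2 * ‖y‖) ^ p := by
        gcongr
        linarith [norm_add_le x y]
    _ = 2 ^ p * ‖y‖ ^ p := Real.mul_rpow (by norm_num) (norm_nonneg y)
    _ ≤ 2 ^ p * ‖x‖ ^ p + 2 ^ p * ‖y‖ ^ p := le_add_of_nonneg_left (by positivity)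

lemma rpow_le_rpow_add_mul_sq {t K ε : ℝ} (hp : 0 ≤ p) (ht : 0 ≤ t) (htK : t ≤ K) (hε : 0 < ε) :
    t ^ p ≤ ε ^ p + K ^ p / ε ^ 2 * t ^ 2 := by
  have hK : 0 ≤ K := ht.trans htK
  rcases le_total t ε with h | h
  · have : t ^ p ≤ ε ^ p := by gcongr
    exact this.trans (le_add_of_nonneg_right (by positivity))
  · calc t ^ p ≤ K ^ p := by gcongr
      _ = K ^ p / ε ^ 2 * ε ^ 2 := by field_simp
      _ ≤ K ^ p / ε ^ 2 * t ^ 2 := by gcongr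
      _ ≤ ε ^ p + K ^ p / ε ^ 2 * t ^ 2 := le_add_of_nonneg_left (by positivity)

/-- All `p`-th integral means of `f` over circles inside the disk are at most `C`, i.e.
`‖f‖_p ^ p ≤ C` in `H^p`. -/
def CircMeanLE (p : ℝ) (f : ℂ → ℂ) (C : ℝ) : Prop :=
  ∀ r ∈ Ico (0 : ℝ) 1, circMean p f r ≤ C

namespace CircMeanLE

variable {C D K ε : ℝ}

lemma mono (hf : CircMeanLE p f C) (h : C ≤ D) : CircMeanLE p f D :=
  fun r hr => (hf r hr).trans h

lemma congr (hf : CircMeanLE p f C) (hfh : EqOn f h uDisk) : CircMeanLE p h C :=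
  fun r hr => circMean_congr hfh hr ▸ hf r hr

lemma add (hp : 0 < p) (hf : CircMeanLE p f C) (hh : CircMeanLE p h D)
    (hfc : ContinuousOn f uDisk) (hhc : ContinuousOn h uDisk) :
    CircMeanLE p (f + h) (2 ^ p * C + 2 ^ p * D) := fun r hr => calc
  circMean p (f + h) r ≤ 2 ^ p * circMean p f r + 2 ^ p * circMean p h r :=
    circMean_le_of_norm_rpow_le hp hp hp (hfc.add hhc) hfc hhc
      (fun _ _ => norm_add_rpow_le hp.le _ _) hr
  _ ≤ 2 ^ p * C + 2 ^ p * D := by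
    gcongr
    exacts [hf r hr, hh r hr]

lemma mul (hp : 0 < p) (hk : ∀ z ∈ uDisk, ‖k z‖ ≤ K) (hf : CircMeanLE p f C)
    (hkc : ContinuousOn k uDisk) (hfc : ContinuousOn f uDisk) :
    CircMeanLE p (k * f) (K ^ p * C) := fun r hr => by
  have hK : 0 ≤ K := (norm_nonneg _).trans (hk 0 zero_mem_uDisk)
  have hmul : circMean p (k * f) r ≤ K ^ p * circMean p f r + 0 * circMean p f r := by
    refine circMean_le_of_norm_rpow_le hp hp hp (hkc.mul hfc) hfc hfc (fun z hz => ?_) hr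
    rw [Pi.mul_apply, norm_mul, Real.mul_rpow (norm_nonneg _) (norm_nonneg _), zero_mul, add_zero]
    gcongr
    exact hk z hz
  calc circMean p (k * f) r ≤ K ^ p * circMean p f r := by simpa using hmul
    _ ≤ K ^ p * C := by gcongr; exact hf r hr

lemma of_norm_le (hp : 0 < p) (hf : ∀ z ∈ uDisk, ‖f z‖ ≤ K) (hfc : ContinuousOn f uDisk) :
    CircMeanLE p f (K ^ p * (2 * Real.pi)) := by
  have hone : CircMeanLE p (fun _ => 1) (2 * Real.pi) := fun r _ => by simp [circMean_const]
  exact (hone.mul hp hf hfc continuousOn_const).congr fun z _ => mul_one (f z)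

lemma of_circMeanLE_two (hp : 0 < p) (hf : ∀ z ∈ uDisk, ‖f z‖ ≤ K) (hε : 0 < ε)
    (hfC : CircMeanLE 2 f C) (hfc : ContinuousOn f uDisk) :
    CircMeanLE p f (2 * Real.pi * ε ^ p + K ^ p / ε ^ 2 * C) := fun r hr => by
  have hK : 0 ≤ K := (norm_nonneg _).trans (hf 0 zero_mem_uDisk)
  have hnorm : ‖(ε : ℂ)‖ = ε := by rw [Complex.norm_real, Real.norm_of_nonneg hε.le]
  calc circMean p f r
      ≤ 1 * circMean p (fun _ => (ε : ℂ)) r + K ^ p / ε ^ 2 * circMean 2 f r :=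
        circMean_le_of_norm_rpow_le hp hp two_pos hfc continuousOn_const hfc (fun z hz => by
          rw [one_mul, hnorm, Real.rpow_two]
          exact rpow_le_rpow_add_mul_sq hp.le (norm_nonneg _) (hf z hz) hε) hr
    _ ≤ 2 * Real.pi * ε ^ p + K ^ p / ε ^ 2 * C := by
        rw [one_mul, circMean_const, hnorm]
        gcongr
        exact hfC r hr

end CircMeanLE

end IntegralMeans

/-! ### Hardy spaces and closures -/

section HardySpaces

variable {p ε : ℝ} {f h k : ℂ → ℂ}

lemma memHinf_id : MemHinf fun z => z :=
  ⟨differentiableOn_id, 1, fun _ hz => (mem_ball_zero_iff.1 hz).le⟩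

/-- `H^∞` as a subalgebra of all functions `ℂ → ℂ`; the values outside the disk are arbitrary. -/
def hinfSubalgebra : Subalgebra ℂ (ℂ → ℂ) where
  carrier := {f | MemHinf f}
  add_mem' := fun ⟨hf, K, hK⟩ ⟨hh, L, hL⟩ =>
    ⟨hf.add hh, K + L, fun z hz => norm_add_le_of_le (hK z hz) (hL z hz)⟩
  mul_mem' := fun ⟨hf, K, hK⟩ ⟨hh, L, hL⟩ =>
    ⟨hf.mul hh, K * L, fun z hz => norm_mul_le_of_le (hK z hz) (hL z hz)⟩
  algebraMap_mem' c := ⟨differentiableOn_const c, ‖c‖, fun _ _ => le_rfl⟩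

lemma MemHinf.pow (hf : MemHinf f) (m : ℕ) : MemHinf fun z => f z ^ m :=
  hinfSubalgebra.pow_mem hf m

lemma MemHinf.memHp (hp : 0 < p) (hf : MemHinf f) : MemHp p f :=
  let ⟨hd, _, hK⟩ := hf
  ⟨hd, _, CircMeanLE.of_norm_le hp hK hd.continuousOn⟩

lemma MemHp.add (hp : 0 < p) (hf : MemHp p f) (hh : MemHp p h) : MemHp p (f + h) :=
  let ⟨hfd, _, hfC⟩ := hf
  let ⟨hhd, _, hhC⟩ := hh
  ⟨hfd.add hhd, _, CircMeanLE.add hp hfC hhC hfd.continuousOn hhd.continuousOn⟩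

lemma MemHp.mul (hp : 0 < p) (hk : MemHinf k) (hf : MemHp p f) : MemHp p (k * f) :=
  let ⟨hkd, _, hkK⟩ := hk
  let ⟨hfd, _, hfC⟩ := hf
  ⟨hkd.mul hfd, _, CircMeanLE.mul hp hkK hfC hkd.continuousOn hfd.continuousOn⟩

lemma MemHp.sub (hp : 0 < p) (hf : MemHp p f) (hh : MemHp p h) : MemHp p (f - h) := by
  have hneg : MemHp p (-1 * h) := hh.mul hp (neg_mem (one_mem hinfSubalgebra))
  rw [neg_one_mul] at hneg
  exact sub_eq_add_neg f h ▸ hf.add hp hneg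

lemma MemHp.congr (hf : MemHp p f) (hfh : EqOn f h uDisk) : MemHp p h :=
  let ⟨hd, C, hC⟩ := hf
  ⟨hd.congr hfh.symm, C, CircMeanLE.congr hC hfh⟩

lemma hpNorm_le_iff (hp : 0 < p) (hf : MemHp p f) (hε : 0 ≤ ε) :
    hpNorm p f ≤ ε ↔ CircMeanLE p f (ε ^ p) := by
  obtain ⟨-, C, hC⟩ := hf
  have hbdd : BddAbove {m | ∃ r ∈ Ico (0 : ℝ) 1, m = circMean p f r} :=
    ⟨C, by rintro _ ⟨r, hr, rfl⟩; exact hC r hr⟩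
  have hnonneg : 0 ≤ sSup {m | ∃ r ∈ Ico (0 : ℝ) 1, m = circMean p f r} :=
    Real.sSup_nonneg (by rintro _ ⟨r, -, rfl⟩; exact circMean_nonneg p f r)
  rw [hpNorm, one_div, Real.rpow_inv_le_iff_of_pos hnonneg hε hp,
    csSup_le_iff hbdd ⟨_, 0, by simp, rfl⟩]
  exact ⟨fun hle r hr => hle _ ⟨r, hr, rfl⟩, by rintro hle _ ⟨r, hr, rfl⟩; exact hle r hr⟩

lemma hpNorm_nonneg (p : ℝ) (f : ℂ → ℂ) : 0 ≤ hpNorm p f :=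
  Real.rpow_nonneg (Real.sSup_nonneg (by rintro _ ⟨r, -, rfl⟩; exact circMean_nonneg p f r)) _

variable {S T : Set (ℂ → ℂ)}

lemma mem_hpClosure_iff (hp : 0 < p) (hS : ∀ u ∈ S, MemHp p u) :
    f ∈ hpClosure p S ↔ MemHp p f ∧ ∀ ε > 0, ∃ u ∈ S, CircMeanLE p (f - u) ε := by
  refine and_congr_right fun hf => ⟨fun ⟨u, hu, ht⟩ ε hε => ?_, fun happrox => ?_⟩
  · obtain ⟨k, hk⟩ := (ht.eventually_le_const (Real.rpow_pos_of_pos hε p⁻¹)).exists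
    have hle := (hpNorm_le_iff hp (hf.sub hp (hS _ (hu k))) (by positivity)).1 hk
    exact ⟨u k, hu k, by rwa [Real.rpow_inv_rpow hε.le hp.ne'] at hle⟩
  · choose u hu hle using fun k : ℕ =>
      happrox ((1 / ((k : ℝ) + 1)) ^ p) (by positivity)
    exact ⟨u, hu, squeeze_zero (fun _ => hpNorm_nonneg _ _)
      (fun k => (hpNorm_le_iff hp (hf.sub hp (hS _ (hu k))) (by positivity)).2 (hle k))
      tendsto_one_div_add_atTop_nhds_zero_nat⟩

lemma subset_hpClosure (hp : 0 < p) (hS : ∀ u ∈ S, MemHp p u) : S ⊆ hpClosure p S :=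
  fun f hf => (mem_hpClosure_iff hp hS).2 ⟨hS f hf, fun ε hε => ⟨f, hf, fun r _ => by
    simpa [circMean, Real.zero_rpow hp.ne'] using hε.le⟩⟩

lemma mem_hpClosure_congr (hp : 0 < p) (hS : ∀ u ∈ S, MemHp p u) (hf : f ∈ hpClosure p S)
    (hfh : EqOn f h uDisk) : h ∈ hpClosure p S := by
  rw [mem_hpClosure_iff hp hS] at hf ⊢
  refine ⟨hf.1.congr hfh, fun ε hε => ?_⟩
  obtain ⟨u, hu, hfu⟩ := hf.2 ε hε
  exact ⟨u, hu, hfu.congr fun z hz => by simp [hfh hz]⟩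

lemma add_mem_hpClosure (hp : 0 < p) (hS : ∀ u ∈ S, MemHp p u)
    (hadd : ∀ u ∈ S, ∀ v ∈ S, u + v ∈ S) (hf : f ∈ hpClosure p S) (hh : h ∈ hpClosure p S) :
    f + h ∈ hpClosure p S := by
  rw [mem_hpClosure_iff hp hS] at hf hh ⊢
  refine ⟨hf.1.add hp hh.1, fun ε hε => ?_⟩
  obtain ⟨u, hu, hfu⟩ := hf.2 (ε / 2 / 2 ^ p) (by positivity)
  obtain ⟨v, hv, hhv⟩ := hh.2 (ε / 2 / 2 ^ p) (by positivity)
  refine ⟨u + v, hadd u hu v hv, ?_⟩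
  rw [add_sub_add_comm]
  exact (hfu.add hp hhv (hf.1.sub hp (hS u hu)).1.continuousOn
    (hh.1.sub hp (hS v hv)).1.continuousOn).mono (by field_simp; norm_num)

lemma mul_mem_hpClosure (hp : 0 < p) (hS : ∀ u ∈ S, MemHp p u) (hT : ∀ u ∈ T, MemHp p u)
    (hk : MemHinf k) (hkS : ∀ u ∈ S, k * u ∈ T) (hf : f ∈ hpClosure p S) :
    k * f ∈ hpClosure p T := by
  rw [mem_hpClosure_iff hp hS] at hf
  refine (mem_hpClosure_iff hp hT).2 ⟨hf.1.mul hp hk, fun ε hε => ?_⟩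
  obtain ⟨hkd, K, hK⟩ := hk
  have hK0 : 0 ≤ K := (norm_nonneg _).trans (hK 0 zero_mem_uDisk)
  obtain ⟨u, hu, hfu⟩ := hf.2 (ε / (K ^ p + 1)) (by positivity)
  refine ⟨k * u, hkS u hu, ?_⟩
  rw [← mul_sub]
  refine (hfu.mul hp hK hkd.continuousOn (hf.1.sub hp (hS u hu)).1.continuousOn).mono ?_
  rw [mul_div_assoc', div_le_iff₀ (by positivity)]
  nlinarith

lemma hpClosure_hpClosure_subset (hp : 0 < p) (hS : ∀ u ∈ S, MemHp p u) :
    hpClosure p (hpClosure p S) ⊆ hpClosure p S := fun f hf => by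
  rw [mem_hpClosure_iff hp fun _ hu => hu.1] at hf
  refine (mem_hpClosure_iff hp hS).2 ⟨hf.1, fun ε hε => ?_⟩
  obtain ⟨u, hu, hfu⟩ := hf.2 (ε / 2 / 2 ^ p) (by positivity)
  obtain ⟨v, hv, huv⟩ := ((mem_hpClosure_iff hp hS).1 hu).2 (ε / 2 / 2 ^ p) (by positivity)
  refine ⟨v, hv, ?_⟩
  rw [← sub_add_sub_cancel f u v]
  exact (hfu.add hp huv (hf.1.sub hp hu.1).1.continuousOn
    (hu.1.sub hp (hS v hv)).1.continuousOn).mono (by field_simp; norm_num)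

/-- The `H^p`-closure of a linear subspace of `H^p`, as a linear subspace. -/
def hpClosureSubmodule (hp : 0 < p) (V : Submodule ℂ (ℂ → ℂ)) (hV : ∀ u ∈ V, MemHp p u) :
    Submodule ℂ (ℂ → ℂ) where
  carrier := hpClosure p V
  zero_mem' := subset_hpClosure hp hV V.zero_mem
  add_mem' := add_mem_hpClosure hp hV fun _ hu _ hv => V.add_mem hu hv
  smul_mem' c _ hf := mul_mem_hpClosure hp hV hV (hinfSubalgebra.algebraMap_mem c)
    (fun _ hu => V.smul_mem c hu) hf

/-- The functions all of whose multiples by powers of `z` lie in `V`: the largest `z`-invariant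
subspace contained in a closed subspace `V` of `H^p`. -/
def zInvCore (V : Set (ℂ → ℂ)) : Set (ℂ → ℂ) :=
  {f | ∀ m : ℕ, (fun z => z ^ m * f z) ∈ V}

lemma zInvCore_subset (V : Set (ℂ → ℂ)) : zInvCore V ⊆ V := fun f hf => by
  simpa using hf 0

lemma isZInvSubspace_zInvCore (hp : 0 < p) {V : Submodule ℂ (ℂ → ℂ)} (hV : ∀ u ∈ V, MemHp p u)
    (hclosed : hpClosure p V ⊆ V) : IsZInvSubspace p (zInvCore V) := by
  have hcore : ∀ f ∈ zInvCore (V : Set (ℂ → ℂ)), MemHp p f := fun f hf =>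
    hV f (zInvCore_subset _ hf)
  refine ⟨hcore, fun m => ?_, fun f hf h hh m => ?_, fun c f hf m => ?_, fun f hf m => ?_,
    fun f hf hlim m => ?_⟩
  · simp only [mul_zero]
    exact V.zero_mem
  · simp only [mul_add]
    exact V.add_mem (hf m) (hh m)
  · simp only [mul_left_comm _ c]
    exact V.smul_mem c (hf m)
  · simpa only [pow_succ, mul_assoc] using hf (m + 1)
  · exact hclosed (mul_mem_hpClosure hp hcore hV (memHinf_id.pow m) (fun u hu => hu m) ⟨hf, hlim⟩)

lemma algGen2_eq_adjoin (F G : ℂ → ℂ) :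
    algGen2 F G = (Algebra.adjoin ℂ {F, G} : Set (ℂ → ℂ)) := by
  have hrange : ({F, G} : Set (ℂ → ℂ)) = Set.range ![F, G] := by
    rw [Matrix.range_cons, Matrix.range_cons, Matrix.range_empty, union_empty, singleton_union]
  ext u
  rw [SetLike.mem_coe, hrange, Algebra.adjoin_range_eq_range_aeval]
  refine exists_congr fun P => ?_
  have heval (z : ℂ) :
      MvPolynomial.aeval ![F, G] P z = MvPolynomial.eval (fun i => ![F, G] i z) P := by
    rw [← MvPolynomial.coe_aeval_eq_eval]
    exact MvPolynomial.comp_aeval_apply ![F, G] (Pi.evalAlgHom ℂ (fun _ : ℂ => ℂ) z) P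
  simp only [← heval]
  exact ⟨fun hu => (funext hu).symm, fun hu z => (congrFun hu z).symm⟩

lemma memHp_of_mem_adjoin (hp : 0 < p) (hT : ∀ v ∈ T, MemHinf v)
    (hf : f ∈ Algebra.adjoin ℂ T) : MemHp p f :=
  MemHinf.memHp hp (Algebra.adjoin_le (S := hinfSubalgebra) hT hf)

lemma memHp_of_mem_adjoin_pair (hp : 0 < p) {F G : ℂ → ℂ} (hF : MemHinf F) (hG : MemHinf G)
    (hf : f ∈ Algebra.adjoin ℂ {F, G}) : MemHp p f :=
  memHp_of_mem_adjoin hp (by rintro _ (rfl | rfl); exacts [hF, hG]) hf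

end HardySpaces

/-! ### Point evaluations on `H^p` -/

section PointEvaluation

variable {p s : ℝ} {f : ℂ → ℂ} {c z : ℂ}

lemma log_norm_le_circleAverage_log_norm (hs : 0 < s) (hf : AnalyticOnNhd ℂ f (closedBall c s))
    (hfc : f c ≠ 0) : Real.log ‖f c‖ ≤ Real.circleAverage (fun z => Real.log ‖f z‖) c s := by
  rw [← abs_of_pos hs] at hf
  rw [hf.circleAverage_log_norm hs.ne' hfc]
  refine le_add_of_nonneg_left (finsum_nonneg fun u => ?_)
  by_cases hu : u ∈ closedBall c |s|
  · refine mul_nonneg (mod_cast MeromorphicOn.AnalyticOnNhd.divisor_nonneg hf u) ?_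
    rcases eq_or_ne c u with rfl | hcu
    · simp
    · rw [abs_of_pos hs, mem_closedBall, dist_comm, dist_eq_norm] at hu
      rw [← div_eq_mul_inv]
      exact Real.log_nonneg ((one_le_div (norm_pos_iff.2 (sub_ne_zero.2 hcu))).2 hu)
  · simp [hu]

-- The tangent line of `x ↦ x ^ p = exp (p * log x)` in the variable `log x`.
lemma rpow_mul_log_le_rpow {x y : ℝ} (hx : 0 < x) (hy : 0 < y) :
    x ^ p * (1 - p * Real.log x) + (x ^ p * p) * Real.log y ≤ y ^ p := by
  have htangent := Real.add_one_le_exp (p * Real.log y - p * Real.log x)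
  calc x ^ p * (1 - p * Real.log x) + (x ^ p * p) * Real.log y
      = x ^ p * (p * Real.log y - p * Real.log x + 1) := by ring
    _ ≤ x ^ p * Real.exp (p * Real.log y - p * Real.log x) := by gcongr
    _ = y ^ p := by
      rw [Real.rpow_def_of_pos hx, Real.rpow_def_of_pos hy, ← Real.exp_add]
      ring_nf

lemma eventually_codiscreteWithin_sphere_ne_zero (hs : 0 < s)
    (hf : AnalyticOnNhd ℂ f (closedBall c s)) (hfc : f c ≠ 0) :
    ∀ᶠ z in codiscreteWithin (sphere c |s|), f z ≠ 0 := by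
  rw [abs_of_pos hs]
  exact ((hf.eqOn_zero_or_eventually_ne_zero_of_preconnected
    (convex_closedBall c s).isPreconnected).resolve_left fun h =>
      hfc (h (mem_closedBall_self hs.le))).filter_mono
      (codiscreteWithin_mono sphere_subset_closedBall)

lemma norm_rpow_le_circleAverage (hp : 0 < p) (hs : 0 < s)
    (hf : AnalyticOnNhd ℂ f (closedBall c s)) :
    ‖f c‖ ^ p ≤ Real.circleAverage (fun z => ‖f z‖ ^ p) c s := by
  rcases eq_or_ne (f c) 0 with hfc | hfc
  · rw [hfc, norm_zero, Real.zero_rpow hp.ne']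
    exact Real.circleAverage_nonneg_of_nonneg fun x _ => by positivity
  set x := ‖f c‖
  have hjensen := log_norm_le_circleAverage_log_norm hs hf hfc
  have hsphere : AnalyticOnNhd ℂ f (sphere c |s|) := by
    rw [abs_of_pos hs]
    exact hf.mono sphere_subset_closedBall
  have hlogint : CircleIntegrable (fun z => (x ^ p * p) • Real.log ‖f z‖) c s :=
    hsphere.meromorphicOn.circleIntegrable_log_norm.const_smul
  have hpowint : CircleIntegrable (fun z => ‖f z‖ ^ p) c s :=
    ContinuousOn.circleIntegrable' (hsphere.continuousOn.norm.rpow_const fun _ _ => Or.inr hp.le)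
  -- Replacing the integrand where `f` vanishes makes the tangent line inequality hold everywhere.
  set φ : ℂ → ℝ := fun z =>
    if f z = 0 then x ^ p * (1 - p * Real.log x) + (x ^ p * p) • Real.log ‖f z‖ else ‖f z‖ ^ p
  have hφ : (fun z => ‖f z‖ ^ p) =ᶠ[codiscreteWithin (sphere c |s|)] φ := by
    filter_upwards [eventually_codiscreteWithin_sphere_ne_zero hs hf hfc] with z hz
      using (if_neg hz).symm
  calc x ^ p = x ^ p * (1 - p * Real.log x) + (x ^ p * p) * Real.log x := by ring
    _ ≤ x ^ p * (1 - p * Real.log x)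
        + (x ^ p * p) * Real.circleAverage (fun z => Real.log ‖f z‖) c s := by gcongr
    _ = Real.circleAverage
        (fun z => x ^ p * (1 - p * Real.log x) + (x ^ p * p) • Real.log ‖f z‖) c s := by
      rw [Real.circleAverage_fun_add (circleIntegrable_const _ _ _) hlogint,
        Real.circleAverage_const, Real.circleAverage_fun_smul, smul_eq_mul]
    _ ≤ Real.circleAverage φ c s := by
      refine Real.circleAverage_mono ((circleIntegrable_const _ _ _).add hlogint)
        (hpowint.congr_codiscreteWithin hφ) fun z _ => ?_
      by_cases hz : f z = 0
      · exact (if_pos hz).ge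
      · exact (rpow_mul_log_le_rpow (norm_pos_iff.2 hfc) (norm_pos_iff.2 hz)).trans
          (if_neg hz).ge
    _ = Real.circleAverage (fun z => ‖f z‖ ^ p) c s :=
      (Real.circleAverage_congr_codiscreteWithin hφ hs.ne').symm

lemma lintegral_polar (c : ℂ) {h : ℂ → ENNReal} (hh : Measurable h) :
    ∫⁻ z, h z = ∫⁻ r in Ioi (0 : ℝ), ENNReal.ofReal r *
      ∫⁻ θ in Ioo (-Real.pi) Real.pi, h (circleMap c r θ) := by
  have hpolar (q : ℝ × ℝ) : Complex.polarCoord.symm q + c = circleMap c q.1 q.2 := by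
    simp [circleMap, Complex.exp_mul_I, add_comm]
  have hmap : Measurable fun q : ℝ × ℝ => circleMap c q.1 q.2 := by
    unfold circleMap
    fun_prop
  rw [← lintegral_add_right_eq_self _ c, ← Complex.lintegral_comp_polarCoord_symm,
    polarCoord_target, Measure.volume_eq_prod, ← Measure.prod_restrict]
  simp only [hpolar, smul_eq_mul]
  rw [lintegral_prod _ (by fun_prop)]
  simp only [lintegral_const_mul' _ _ ENNReal.ofReal_ne_top]

lemma lintegral_circleMap_eq_ofReal {φ : ℂ → ℝ} (hφ : ∀ z, 0 ≤ φ z) {r : ℝ}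
    (hφc : ContinuousOn φ (sphere c |r|)) :
    ∫⁻ θ in Ioo (-Real.pi) Real.pi, ENNReal.ofReal (φ (circleMap c r θ)) =
      ENNReal.ofReal (2 * Real.pi * Real.circleAverage φ c r) := by
  have hcont : Continuous fun θ => φ (circleMap c r θ) :=
    hφc.comp_continuous (continuous_circleMap c r) (circleMap_mem_sphere' c r)
  have hperiod : Function.Periodic (fun θ => φ (circleMap c r θ)) (2 * Real.pi) := fun θ => by
    simp only [periodic_circleMap c r θ]
  have hshift : ∫ θ in Ioo (-Real.pi) Real.pi, φ (circleMap c r θ) =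
      ∫ θ in (0 : ℝ)..2 * Real.pi, φ (circleMap c r θ) := by
    rw [← zero_add (2 * Real.pi), hperiod.intervalIntegral_add_eq 0 (-Real.pi),
      intervalIntegral.integral_of_le (by linarith [Real.pi_pos]), integral_Ioc_eq_integral_Ioo]
    congr 3
    ring
  rw [Real.circleAverage_def, smul_eq_mul, mul_inv_cancel_left₀ (by positivity), ← hshift,
    ofReal_integral_eq_lintegral_ofReal (hcont.integrableOn_Icc.mono_set Ioo_subset_Icc_self)
      (ae_of_all _ fun _ => hφ _)]

lemma lintegral_ball_eq_lintegral_circleAverage {φ : ℂ → ℝ} (hφ : ∀ z, 0 ≤ φ z) {δ : ℝ}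
    (hφc : ContinuousOn φ (ball c δ)) :
    ∫⁻ z in ball c δ, ENNReal.ofReal (φ z) =
      ∫⁻ r in Ioo 0 δ, ENNReal.ofReal (r * (2 * Real.pi * Real.circleAverage φ c r)) := by
  have hmeas : Measurable ((ball c δ).indicator fun z => ENNReal.ofReal (φ z)) := by
    rw [← Set.piecewise_eq_indicator]
    exact (ENNReal.continuous_ofReal.comp_continuousOn hφc).measurable_piecewise
      continuousOn_const measurableSet_ball
  rw [← lintegral_indicator measurableSet_ball, lintegral_polar c hmeas,
    ← lintegral_indicator measurableSet_Ioi, ← lintegral_indicator measurableSet_Ioo]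
  refine lintegral_congr fun r => ?_
  rcases le_or_gt r 0 with hr | hr
  · simp [hr.not_gt]
  have hmem (θ : ℝ) : circleMap c r θ ∈ ball c δ ↔ r < δ := by
    rw [mem_ball, circleMap_mem_sphere c hr.le θ]
  rw [indicator_of_mem (mem_Ioi.2 hr)]
  by_cases hrδ : r < δ
  · rw [indicator_of_mem (mem_Ioo.2 ⟨hr, hrδ⟩), ENNReal.ofReal_mul hr.le,
      ← lintegral_circleMap_eq_ofReal hφ (hφc.mono (sphere_subset_ball (by rwa [abs_of_pos hr])))]
    simp only [indicator_of_mem ((hmem _).2 hrδ)]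
  · simp [hmem, hrδ]

lemma ofReal_norm_rpow_mul_volume_ball_le (hp : 0 < p) {δ : ℝ}
    (hf : DifferentiableOn ℂ f (ball c δ)) :
    ENNReal.ofReal (‖f c‖ ^ p) * volume (ball c δ) ≤
      ∫⁻ z in ball c δ, ENNReal.ofReal (‖f z‖ ^ p) := by
  rw [← setLIntegral_const, lintegral_ball_eq_lintegral_circleAverage (fun _ => by positivity)
      (hf.continuousOn.norm.rpow_const fun _ _ => Or.inr hp.le),
    lintegral_ball_eq_lintegral_circleAverage (fun _ => by positivity) continuousOn_const]
  refine setLIntegral_mono' measurableSet_Ioo fun r hr => ENNReal.ofReal_le_ofReal ?_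
  have hr0 : 0 ≤ r := hr.1.le
  have hsub := norm_rpow_le_circleAverage hp hr.1
    ((hf.analyticOnNhd isOpen_ball).mono (closedBall_subset_ball hr.2))
  rw [Real.circleAverage_const]
  gcongr

lemma two_pi_mul_circleAverage_norm_rpow (p : ℝ) (f : ℂ → ℂ) (r : ℝ) :
    2 * Real.pi * Real.circleAverage (fun z => ‖f z‖ ^ p) 0 r = circMean p f r := by
  rw [Real.circleAverage_def, smul_eq_mul, mul_inv_cancel_left₀ (by positivity)]
  simp only [circMean, circleMap, zero_add]

lemma lintegral_uDisk_norm_rpow_le (hp : 0 < p) (hf : ContinuousOn f uDisk) {C : ℝ}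
    (hC : CircMeanLE p f C) : ∫⁻ z in uDisk, ENNReal.ofReal (‖f z‖ ^ p) ≤ ENNReal.ofReal C := by
  rw [uDisk, lintegral_ball_eq_lintegral_circleAverage (fun _ => by positivity)
    (hf.norm.rpow_const fun _ _ => Or.inr hp.le)]
  calc _ ≤ ∫⁻ _ in Ioo (0 : ℝ) 1, ENNReal.ofReal C := by
        refine setLIntegral_mono' measurableSet_Ioo fun r hr => ENNReal.ofReal_le_ofReal ?_
        rw [two_pi_mul_circleAverage_norm_rpow]
        exact (mul_le_of_le_one_left (circMean_nonneg p f r) hr.2.le).trans (hC r ⟨hr.1.le, hr.2⟩)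
    _ = ENNReal.ofReal C := by simp

lemma CircMeanLE.sq_mul_norm_rpow_le (hp : 0 < p) (hf : DifferentiableOn ℂ f uDisk) {C : ℝ}
    (hC : CircMeanLE p f C) (hz : z ∈ uDisk) : (1 - ‖z‖) ^ 2 * ‖f z‖ ^ p ≤ C := by
  have hball : ball z (1 - ‖z‖) ⊆ uDisk := ball_subset_ball' (by simp)
  have hδ : 0 ≤ 1 - ‖z‖ := sub_nonneg.2 (mem_ball_zero_iff.1 hz).le
  have hC0 : 0 ≤ C := (circMean_nonneg p f 0).trans (hC 0 (by simp))
  have harea := (ofReal_norm_rpow_mul_volume_ball_le hp (hf.mono hball)).trans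
    ((lintegral_mono_set hball).trans (lintegral_uDisk_norm_rpow_le hp hf.continuousOn hC))
  rw [Complex.volume_ball, ← ENNReal.ofReal_pow hδ, ← ENNReal.ofReal_coe_nnreal,
    ← ENNReal.ofReal_mul (by positivity), ← ENNReal.ofReal_mul (by positivity),
    ENNReal.ofReal_le_ofReal_iff hC0, NNReal.coe_real_pi] at harea
  nlinarith [mul_nonneg (sq_nonneg (1 - ‖z‖)) (Real.rpow_nonneg (norm_nonneg (f z)) p),
    Real.pi_gt_three]

lemma norm_le_mul_hpNorm (hp : 0 < p) (hf : MemHp p f) (hz : z ∈ uDisk) :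
    ‖f z‖ ≤ (((1 - ‖z‖) ^ 2) ^ p⁻¹)⁻¹ * hpNorm p f := by
  have hN := hpNorm_nonneg p f
  have hδ : 0 < (1 - ‖z‖) ^ 2 := pow_pos (sub_pos.2 (mem_ball_zero_iff.1 hz)) 2
  have hle := ((hpNorm_le_iff hp hf hN).1 le_rfl).sq_mul_norm_rpow_le hp hf.1 hz
  rw [← div_eq_inv_mul, le_div_iff₀ (by positivity), mul_comm,
    ← Real.rpow_le_rpow_iff (by positivity) hN hp, Real.mul_rpow (by positivity) (by positivity),
    Real.rpow_inv_rpow hδ.le hp.ne']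
  exact hle

lemma tendsto_apply_of_tendsto_hpNorm (hp : 0 < p) {u : ℕ → ℂ → ℂ} (hf : MemHp p f)
    (hu : ∀ k, MemHp p (u k)) (hlim : Tendsto (fun k => hpNorm p (f - u k)) atTop (𝓝 0))
    (hz : z ∈ uDisk) : Tendsto (fun k => u k z) atTop (𝓝 (f z)) := by
  rw [tendsto_iff_norm_sub_tendsto_zero]
  refine squeeze_zero (fun _ => norm_nonneg _) (fun k => ?_)
    (by simpa using hlim.const_mul ((((1 - ‖z‖) ^ 2) ^ p⁻¹)⁻¹))
  rw [norm_sub_rev]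
  exact norm_le_mul_hpNorm hp (hf.sub hp (hu k)) hz

lemma eq_of_mem_hpClosure (hp : 0 < p) {S : Set (ℂ → ℂ)} (hS : ∀ u ∈ S, MemHp p u)
    (hf : f ∈ hpClosure p S) {x y : ℂ} (hx : x ∈ uDisk) (hy : y ∈ uDisk)
    (hxy : ∀ u ∈ S, u x = u y) : f x = f y := by
  obtain ⟨hfm, u, hu, hlim⟩ := hf
  have hlimx := tendsto_apply_of_tendsto_hpNorm hp hfm (fun k => hS _ (hu k)) hlim hx
  have hlimy := tendsto_apply_of_tendsto_hpNorm hp hfm (fun k => hS _ (hu k)) hlim hy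
  exact tendsto_nhds_unique hlimx (by simpa only [hxy _ (hu _)] using hlimy)

end PointEvaluation

/-! ### Littlewood subordination in `H²` -/

section Littlewood

variable {b h : ℂ → ℂ} {c : ℕ → ℂ} {r K : ℝ}

lemma integral_circle_eq (hf : DifferentiableOn ℂ h uDisk) (hr : r ∈ Ico (0 : ℝ) 1) :
    ∫ θ in (0 : ℝ)..(2 * Real.pi), h ((r : ℂ) * Complex.exp ((θ : ℂ) * Complex.I)) =
      2 * Real.pi * h 0 := by
  have hsub : closedBall (0 : ℂ) |r| ⊆ uDisk := by
    rw [abs_of_nonneg hr.1]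
    exact closedBall_subset_ball hr.2
  have hmean := (hf.diffContOnCl_ball hsub).circleAverage
  simp only [Real.circleAverage_def, circleMap, zero_add, Complex.real_smul] at hmean
  rw [← hmean]
  push_cast
  rw [mul_inv_cancel_left₀ (by simp)]

lemma circMean_two_add_const (hf : DifferentiableOn ℂ h uDisk) (h0 : h 0 = 0) (α : ℂ)
    (hr : r ∈ Ico (0 : ℝ) 1) :
    circMean 2 (fun z => h z + α) r = circMean 2 h r + 2 * Real.pi * ‖α‖ ^ 2 := by
  have hcirc : Continuous fun θ : ℝ => h ((r : ℂ) * Complex.exp ((θ : ℂ) * Complex.I)) :=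
    hf.continuousOn.comp_continuous (by fun_prop) (mem_uDisk_of_mem_Ico hr)
  have hcross : ∫ θ in (0 : ℝ)..(2 * Real.pi),
      (h ((r : ℂ) * Complex.exp ((θ : ℂ) * Complex.I)) * (starRingEnd ℂ) α).re = 0 := by
    have hre := Complex.reCLM.intervalIntegral_comp_comm (μ := volume)
      ((hcirc.mul_const ((starRingEnd ℂ) α)).intervalIntegrable 0 (2 * Real.pi))
    rw [intervalIntegral.integral_mul_const, integral_circle_eq hf hr, h0] at hre
    simpa using hre
  have hexpand (z : ℂ) : ‖h z + α‖ ^ (2 : ℝ) =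
      ‖h z‖ ^ (2 : ℝ) + ‖α‖ ^ 2 + 2 * (h z * (starRingEnd ℂ) α).re := by
    simp only [Real.rpow_two, Complex.sq_norm, Complex.normSq_add]
  have hsq := continuous_norm_rpow_circle two_pos hf.continuousOn hr
  simp only [circMean, hexpand]
  rw [intervalIntegral.integral_add, intervalIntegral.integral_add,
    intervalIntegral.integral_const_mul, hcross]
  · simp
  · exact hsq.intervalIntegrable _ _
  · exact intervalIntegrable_const
  · exact (hsq.add_const _).intervalIntegrable _ _
  · exact ((Complex.continuous_re.comp (hcirc.mul_const _)).const_mul 2).intervalIntegrable _ _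

lemma circMean_two_sum_range_succ (hb : DifferentiableOn ℂ b uDisk) (hb0 : b 0 = 0)
    (c : ℕ → ℂ) (N : ℕ) (hr : r ∈ Ico (0 : ℝ) 1) :
    circMean 2 (fun z => ∑ k ∈ Finset.range (N + 1), c k * b z ^ k) r =
      circMean 2 (fun z => b z * ∑ k ∈ Finset.range N, c (k + 1) * b z ^ k) r +
        2 * Real.pi * ‖c 0‖ ^ 2 := by
  have hd : DifferentiableOn ℂ (fun z => b z * ∑ k ∈ Finset.range N, c (k + 1) * b z ^ k) uDisk :=
    hb.fun_mul (DifferentiableOn.fun_sum fun k _ => (hb.pow k).const_mul _)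
  rw [← circMean_two_add_const hd (by simp [hb0]) _ hr]
  congr 1 with z
  rw [Finset.sum_range_succ', Finset.mul_sum, pow_zero, mul_one]
  congr 1
  exact Finset.sum_congr rfl fun k _ => by ring

lemma circMean_two_sum_le (hb : DifferentiableOn ℂ b uDisk) (hb1 : ∀ z ∈ uDisk, ‖b z‖ ≤ 1)
    (hb0 : b 0 = 0) (hr : r ∈ Ico (0 : ℝ) 1) (c : ℕ → ℂ) (N : ℕ) :
    circMean 2 (fun z => ∑ k ∈ Finset.range N, c k * b z ^ k) r ≤
      2 * Real.pi * ∑ k ∈ Finset.range N, ‖c k‖ ^ 2 := by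
  induction N generalizing c with
  | zero => simp [circMean]
  | succ N ih =>
    have hd : DifferentiableOn ℂ (fun z => ∑ k ∈ Finset.range N, c (k + 1) * b z ^ k) uDisk :=
      DifferentiableOn.fun_sum fun k _ => (hb.pow k).const_mul _
    have hmul : circMean 2 (fun z => b z * ∑ k ∈ Finset.range N, c (k + 1) * b z ^ k) r ≤
        circMean 2 (fun z => ∑ k ∈ Finset.range N, c (k + 1) * b z ^ k) r := by
      refine intervalIntegral.integral_mono (by positivity)
        ((continuous_norm_rpow_circle two_pos (hb.fun_mul hd).continuousOn hr).intervalIntegrable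
          _ _)
        ((continuous_norm_rpow_circle two_pos hd.continuousOn hr).intervalIntegrable _ _)
        fun θ => ?_
      dsimp only
      rw [norm_mul]
      gcongr
      exact mul_le_of_le_one_left (norm_nonneg _) (hb1 _ (mem_uDisk_of_mem_Ico hr θ))
    rw [circMean_two_sum_range_succ hb hb0 c N hr, Finset.sum_range_succ', mul_add]
    linarith [ih fun k => c (k + 1)]

lemma circMean_two_sum_eq (hr : r ∈ Ico (0 : ℝ) 1) (c : ℕ → ℂ) (N : ℕ) :
    circMean 2 (fun z => ∑ k ∈ Finset.range N, c k * z ^ k) r =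
      2 * Real.pi * ∑ k ∈ Finset.range N, ‖c k‖ ^ 2 * (r ^ 2) ^ k := by
  induction N generalizing c with
  | zero => simp [circMean]
  | succ N ih =>
    have hmul : circMean 2 (fun z => z * ∑ k ∈ Finset.range N, c (k + 1) * z ^ k) r =
        r ^ 2 * circMean 2 (fun z => ∑ k ∈ Finset.range N, c (k + 1) * z ^ k) r := by
      unfold circMean
      rw [← intervalIntegral.integral_const_mul]
      congr 1 with θ
      simp [Complex.norm_exp_ofReal_mul_I, mul_pow]
    rw [circMean_two_sum_range_succ (b := fun z => z) differentiableOn_id rfl c N hr, hmul, ih,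
      Finset.sum_range_succ']
    simp only [pow_succ _ _, ← mul_assoc, ← Finset.sum_mul]
    ring

lemma summable_norm_mul_pow (hc : ∀ z ∈ uDisk, HasSum (fun k => c k * z ^ k) (h z))
    (hr : r ∈ Ico (0 : ℝ) 1) : Summable fun k => ‖c k‖ * r ^ k := by
  have hmem : (r : ℂ) ∈ uDisk := by simpa [uDisk, abs_of_nonneg hr.1] using hr.2
  simpa [abs_of_nonneg hr.1] using (hc r hmem).summable.norm

lemma tendsto_circMean_sum (hb : DifferentiableOn ℂ b uDisk) (hb1 : MapsTo b uDisk uDisk)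
    (hb0 : b 0 = 0) (hc : ∀ z ∈ uDisk, HasSum (fun k => c k * z ^ k) (h z)) {p : ℝ} (hp : 0 < p)
    (hr : r ∈ Ico (0 : ℝ) 1) :
    Tendsto (fun N => circMean p (fun z => ∑ k ∈ Finset.range N, c k * b z ^ k) r) atTop
      (𝓝 (circMean p (h ∘ b) r)) := by
  have hcont (N : ℕ) : ContinuousOn (fun z => ∑ k ∈ Finset.range N, c k * b z ^ k) uDisk :=
    (DifferentiableOn.fun_sum fun k _ => (hb.pow k).const_mul _).continuousOn
  have hschwarz (θ : ℝ) : ‖b ((r : ℂ) * Complex.exp ((θ : ℂ) * Complex.I))‖ ≤ r := by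
    refine (norm_le_norm_of_mapsTo_ball hb (hb1.mono_right ball_subset_closedBall) hb0
      (mem_ball_zero_iff.1 (mem_uDisk_of_mem_Ico hr θ))).trans_eq ?_
    simp [Complex.norm_exp_ofReal_mul_I, abs_of_nonneg hr.1]
  refine intervalIntegral.tendsto_integral_filter_of_dominated_convergence
    (fun _ => (∑' k, ‖c k‖ * r ^ k) ^ p)
    (Eventually.of_forall fun N =>
      (continuous_norm_rpow_circle hp (hcont N) hr).aestronglyMeasurable)
    (Eventually.of_forall fun N => ae_of_all _ fun θ _ => ?_) intervalIntegrable_const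
    (ae_of_all _ fun θ _ => ?_)
  · rw [Real.norm_of_nonneg (by positivity)]
    gcongr
    refine (norm_sum_le_of_le _ fun k _ => ?_).trans
      ((summable_norm_mul_pow hc hr).sum_le_tsum _ fun k _ => mul_nonneg (norm_nonneg _)
        (pow_nonneg hr.1 k))
    rw [norm_mul, norm_pow]
    gcongr
    exact hschwarz θ
  · exact (hc _ (hb1 (mem_uDisk_of_mem_Ico hr θ))).tendsto_sum_nat.norm.rpow_const (Or.inr hp.le)

lemma CircMeanLE.comp_two (hb : DifferentiableOn ℂ b uDisk) (hb1 : MapsTo b uDisk uDisk)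
    (hb0 : b 0 = 0) (hc : ∀ z ∈ uDisk, HasSum (fun k => c k * z ^ k) (h z))
    (hsum : Summable fun k => ‖c k‖ ^ 2) :
    CircMeanLE 2 (h ∘ b) (2 * Real.pi * ∑' k, ‖c k‖ ^ 2) := fun r hr =>
  le_of_tendsto' (tendsto_circMean_sum hb hb1 hb0 hc two_pos hr) fun N =>
    (circMean_two_sum_le hb (fun z hz => (mem_ball_zero_iff.1 (hb1 hz)).le) hb0 hr c N).trans
      (by gcongr; exact hsum.sum_le_tsum _ fun _ _ => by positivity)

lemma sum_sq_norm_le (hd : DifferentiableOn ℂ h uDisk) (hK : ∀ z ∈ uDisk, ‖h z‖ ≤ K)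
    (hc : ∀ z ∈ uDisk, HasSum (fun k => c k * z ^ k) (h z)) (N : ℕ) :
    ∑ k ∈ Finset.range N, ‖c k‖ ^ 2 ≤ K ^ 2 := by
  have hlt (r : ℝ) (hr : r ∈ Ico (0 : ℝ) 1) :
      ∑ k ∈ Finset.range N, ‖c k‖ ^ 2 * (r ^ 2) ^ k ≤ K ^ 2 := by
    have hlim := tendsto_circMean_sum differentiableOn_id (mapsTo_id _) rfl hc two_pos hr
    simp only [id, circMean_two_sum_eq hr] at hlim
    have hmono : Monotone fun N => 2 * Real.pi * ∑ k ∈ Finset.range N, ‖c k‖ ^ 2 * (r ^ 2) ^ k :=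
      (monotone_nat_of_le_succ fun N => by
        rw [Finset.sum_range_succ]
        exact le_add_of_nonneg_right (by positivity)).const_mul Real.two_pi_pos.le
    have hmean := CircMeanLE.of_norm_le two_pos hK hd.continuousOn r hr
    rw [Real.rpow_two] at hmean
    exact le_of_mul_le_mul_left
      ((hmono.ge_of_tendsto hlim N).trans (hmean.trans_eq (mul_comm _ _))) Real.two_pi_pos
  have hcont : Continuous fun r : ℝ => ∑ k ∈ Finset.range N, ‖c k‖ ^ 2 * (r ^ 2) ^ k := by fun_prop
  have hlim := (hcont.tendsto 1).mono_left (nhdsWithin_le_nhds (s := Iio 1))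
  refine le_of_tendsto (by simpa using hlim) ?_
  filter_upwards [Ico_mem_nhdsLT (zero_lt_one' ℝ)] with r hr using hlt r hr

lemma exists_hasSum_of_differentiableOn (hd : DifferentiableOn ℂ h uDisk) :
    ∃ c : ℕ → ℂ, ∀ z ∈ uDisk, HasSum (fun k => c k * z ^ k) (h z) := by
  refine ⟨fun k => (k.factorial : ℂ)⁻¹ * iteratedDeriv k h 0, fun z hz => ?_⟩
  have htaylor := Complex.hasSum_taylorSeries_on_ball hd hz
  simp only [sub_zero, smul_eq_mul] at htaylor
  exact htaylor.congr_fun fun k => by ring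

end Littlewood

/-! ### Approximation of `h ∘ b` by polynomials in `b` -/

section PolynomialApproximation

variable {b h : ℂ → ℂ} {c : ℕ → ℂ} {K ε : ℝ}

lemma norm_one_sub_pow_le_one {ρ : ℝ} (hρ : ρ ∈ Ico (0 : ℝ) 1) (k : ℕ) :
    ‖(1 : ℂ) - (ρ : ℂ) ^ k‖ ≤ 1 := by
  have hnonneg := pow_nonneg hρ.1 k
  have hle := pow_le_one₀ (n := k) hρ.1 hρ.2.le
  rw [← Complex.ofReal_pow, ← Complex.ofReal_one, ← Complex.ofReal_sub, Complex.norm_real,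
    Real.norm_of_nonneg (by linarith)]
  linarith

lemma sq_norm_mul_one_sub_pow_le {ρ : ℝ} (hρ : ρ ∈ Ico (0 : ℝ) 1) (c : ℕ → ℂ) (k : ℕ) :
    ‖c k * (1 - (ρ : ℂ) ^ k)‖ ^ 2 ≤ ‖c k‖ ^ 2 := by
  rw [norm_mul]
  gcongr
  exact mul_le_of_le_one_right (norm_nonneg _) (norm_one_sub_pow_le_one hρ k)

lemma exists_tsum_sq_norm_mul_one_sub_pow_lt (hsum : Summable fun k => ‖c k‖ ^ 2) (hε : 0 < ε) :
    ∃ ρ ∈ Ico (0 : ℝ) 1, ∑' k, ‖c k * (1 - (ρ : ℂ) ^ k)‖ ^ 2 < ε := by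
  have hlim : Tendsto (fun ρ : ℝ => ∑' k, ‖c k * (1 - (ρ : ℂ) ^ k)‖ ^ 2) (𝓝[<] 1)
      (𝓝 (∑' _ : ℕ, (0 : ℝ))) := by
    refine tendsto_tsum_of_dominated_convergence hsum (fun k => ?_) ?_
    · have hcont : Continuous fun ρ : ℝ => ‖c k * (1 - (ρ : ℂ) ^ k)‖ ^ 2 := by fun_prop
      simpa using (hcont.tendsto 1).mono_left (nhdsWithin_le_nhds (s := Iio 1))
    · filter_upwards [Ico_mem_nhdsLT (zero_lt_one' ℝ)] with ρ hρ k
      rw [Real.norm_of_nonneg (by positivity)]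
      exact sq_norm_mul_one_sub_pow_le hρ c k
  rw [tsum_zero] at hlim
  obtain ⟨ρ, hlt, hρ⟩ := ((hlim.eventually (gt_mem_nhds hε)).and
    (Ico_mem_nhdsLT (zero_lt_one' ℝ))).exists
  exact ⟨ρ, hρ, hlt⟩

lemma norm_mul_le_of_mem_uDisk {ρ : ℝ} (hρ : 0 ≤ ρ) {z : ℂ} (hz : z ∈ uDisk) :
    ‖(ρ : ℂ) * z‖ ≤ ρ := by
  rw [norm_mul, Complex.norm_real, Real.norm_of_nonneg hρ]
  exact mul_le_of_le_one_right hρ (mem_ball_zero_iff.1 hz).le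

lemma mapsTo_mul_uDisk {ρ : ℝ} (hρ : ρ ∈ Ico (0 : ℝ) 1) :
    MapsTo (fun z => (ρ : ℂ) * z) uDisk uDisk :=
  fun _ hz => mem_ball_zero_iff.2 ((norm_mul_le_of_mem_uDisk hρ.1 hz).trans_lt hρ.2)

lemma exists_dilation_circMeanLE_comp_sub (hd : DifferentiableOn ℂ h uDisk)
    (hK : ∀ z ∈ uDisk, ‖h z‖ ≤ K) (hb : DifferentiableOn ℂ b uDisk) (hb1 : MapsTo b uDisk uDisk)
    (hb0 : b 0 = 0) (hε : 0 < ε) :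
    ∃ ρ ∈ Ico (0 : ℝ) 1, CircMeanLE 2 (fun z => h (b z) - h (ρ * b z)) ε := by
  obtain ⟨c, hc⟩ := exists_hasSum_of_differentiableOn hd
  have hsum : Summable fun k => ‖c k‖ ^ 2 :=
    summable_of_sum_range_le (fun _ => by positivity) (sum_sq_norm_le hd hK hc)
  obtain ⟨ρ, hρ, hlt⟩ :=
    exists_tsum_sq_norm_mul_one_sub_pow_lt hsum (div_pos hε Real.two_pi_pos)
  have hcρ (z : ℂ) (hz : z ∈ uDisk) :
      HasSum (fun k => c k * (1 - (ρ : ℂ) ^ k) * z ^ k) (h z - h (ρ * z)) :=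
    ((hc z hz).sub (hc _ (mapsTo_mul_uDisk hρ hz))).congr_fun fun k => by ring
  have hsumρ := hsum.of_nonneg_of_le (fun _ => by positivity) (sq_norm_mul_one_sub_pow_le hρ c)
  refine ⟨ρ, hρ, (CircMeanLE.comp_two hb hb1 hb0 hcρ hsumρ).mono ?_⟩
  rw [mul_comm]
  exact ((lt_div_iff₀ Real.two_pi_pos).1 hlt).le

lemma exists_polynomial_norm_dilation_sub_le (hd : DifferentiableOn ℂ h uDisk) {ρ : ℝ}
    (hρ : ρ ∈ Ico (0 : ℝ) 1) (hε : 0 < ε) :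
    ∃ P : ℂ[X], ∀ z ∈ uDisk, ‖h (ρ * z) - P.eval z‖ ≤ ε := by
  obtain ⟨c, hc⟩ := exists_hasSum_of_differentiableOn hd
  have hunif : TendstoUniformlyOn (fun N z => ∑ k ∈ Finset.range N, c k * ((ρ : ℂ) * z) ^ k)
      (fun z => ∑' k, c k * ((ρ : ℂ) * z) ^ k) atTop uDisk :=
    tendstoUniformlyOn_tsum_nat (summable_norm_mul_pow hc hρ) fun k z hz => by
      rw [norm_mul, norm_pow]
      gcongr
      exact norm_mul_le_of_mem_uDisk hρ.1 hz
  obtain ⟨N, hN⟩ := (Metric.tendstoUniformlyOn_iff.1 hunif ε hε).exists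
  refine ⟨∑ k ∈ Finset.range N, C (c k * (ρ : ℂ) ^ k) * X ^ k, fun z hz => ?_⟩
  have hclose := (hN z hz).le
  rw [(hc _ (mapsTo_mul_uDisk hρ hz)).tsum_eq, dist_eq_norm] at hclose
  simpa [Polynomial.eval_finsetSum, mul_pow, mul_assoc] using hclose

lemma exists_polynomial_circMeanLE_comp_sub (hd : DifferentiableOn ℂ h uDisk)
    (hK : ∀ z ∈ uDisk, ‖h z‖ ≤ K) (hb : DifferentiableOn ℂ b uDisk) (hb1 : MapsTo b uDisk uDisk)
    (hb0 : b 0 = 0) (hε : 0 < ε) :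
    ∃ P : ℂ[X], (∀ z ∈ uDisk, ‖P.eval z‖ ≤ K + 1) ∧
      CircMeanLE 2 (fun z => h (b z) - P.eval (b z)) ε := by
  obtain ⟨ρ, hρ, hdil⟩ := exists_dilation_circMeanLE_comp_sub hd hK hb hb1 hb0
    (ε := ε / 8) (by positivity)
  obtain ⟨P, hP⟩ := exists_polynomial_norm_dilation_sub_le hd hρ
    (ε := min 1 (√(ε / (16 * Real.pi)))) (by positivity)
  have hdρ : DifferentiableOn ℂ (fun z => h (ρ * z)) uDisk :=
    hd.comp (differentiableOn_id.const_mul _) (mapsTo_mul_uDisk hρ)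
  refine ⟨P, fun z hz => ?_, ?_⟩
  · have htri := norm_sub_norm_le (P.eval z) (h (ρ * z))
    rw [norm_sub_rev] at htri
    linarith [(hP z hz).trans (min_le_left _ _), hK _ (mapsTo_mul_uDisk hρ hz)]
  · have hdb := hdρ.comp hb hb1
    have hdP : DifferentiableOn ℂ (fun z => P.eval (b z)) uDisk :=
      P.differentiable.comp_differentiableOn hb
    have htrunc := CircMeanLE.of_norm_le two_pos
      (fun z hz => (hP (b z) (hb1 hz)).trans (min_le_right _ _)) (hdb.sub hdP).continuousOn
    refine ((hdil.add two_pos htrunc ((hd.comp hb hb1).sub hdb).continuousOn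
      (hdb.sub hdP).continuousOn).mono (le_of_eq ?_)).congr fun z _ => sub_add_sub_cancel _ _ _
    rw [Real.rpow_two, Real.rpow_two, Real.sq_sqrt (by positivity)]
    field_simp
    norm_num

lemma mem_hpClosure_of_circMeanLE_two {p : ℝ} (hp : 0 < p) {S : Set (ℂ → ℂ)}
    (hS : ∀ u ∈ S, MemHp p u) {f : ℂ → ℂ} (hf : MemHp p f)
    (happrox : ∀ ε > 0, ∃ u ∈ S, (∀ z ∈ uDisk, ‖f z - u z‖ ≤ K) ∧ CircMeanLE 2 (f - u) ε) :
    f ∈ hpClosure p S := by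
  refine (mem_hpClosure_iff hp hS).2 ⟨hf, fun ε hε => ?_⟩
  obtain ⟨u₁, -, hbound, -⟩ := happrox 1 one_pos
  have hK : 0 ≤ K := (norm_nonneg _).trans (hbound 0 zero_mem_uDisk)
  set t : ℝ := (ε / (4 * Real.pi)) ^ p⁻¹ with ht
  have ht0 : 0 < t := by positivity
  have htp : 2 * Real.pi * t ^ p = ε / 2 := by
    rw [ht, Real.rpow_inv_rpow (by positivity) hp.ne']
    field_simp
    norm_num
  obtain ⟨u, huS, huK, hu⟩ := happrox (ε / (2 * (K ^ p / t ^ 2 + 1))) (by positivity)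
  refine ⟨u, huS, (CircMeanLE.of_circMeanLE_two hp huK ht0 hu
    (hf.1.sub (hS u huS).1).continuousOn).mono ?_⟩
  rw [htp]
  calc ε / 2 + K ^ p / t ^ 2 * (ε / (2 * (K ^ p / t ^ 2 + 1)))
      ≤ ε / 2 + (K ^ p / t ^ 2 + 1) * (ε / (2 * (K ^ p / t ^ 2 + 1))) := by gcongr; linarith
    _ = ε := by field_simp; ring

lemma memHinf_of_mapsTo (hb : DifferentiableOn ℂ b uDisk) (hb1 : MapsTo b uDisk uDisk) :
    MemHinf b :=
  ⟨hb, 1, fun _ hz => (mem_ball_zero_iff.1 (hb1 hz)).le⟩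

lemma MemHinf.comp (hh : MemHinf h) (hb : DifferentiableOn ℂ b uDisk)
    (hb1 : MapsTo b uDisk uDisk) : MemHinf (h ∘ b) :=
  ⟨hh.1.comp hb hb1, hh.2.imp fun _ hK _ hz => hK _ (hb1 hz)⟩

lemma comp_mem_hpClosure {p : ℝ} (hp : 0 < p) (hh : MemHinf h) (hb : DifferentiableOn ℂ b uDisk)
    (hb1 : MapsTo b uDisk uDisk) (hb0 : b 0 = 0) :
    h ∘ b ∈ hpClosure p (Algebra.adjoin ℂ {b} : Set (ℂ → ℂ)) := by
  obtain ⟨hd, K, hK⟩ := id hh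
  have hS (u : ℂ → ℂ) (hu : u ∈ Algebra.adjoin ℂ {b}) : MemHp p u :=
    memHp_of_mem_adjoin hp (by rintro _ rfl; exact memHinf_of_mapsTo hb hb1) hu
  refine mem_hpClosure_of_circMeanLE_two (K := K + (K + 1)) hp hS
    ((hh.comp hb hb1).memHp hp) fun ε hε => ?_
  obtain ⟨P, hP, hle⟩ := exists_polynomial_circMeanLE_comp_sub hd hK hb hb1 hb0 hε
  have haeval : Polynomial.aeval b P = fun z => P.eval (b z) :=
    funext (Polynomial.aeval_fn_apply P b)
  refine ⟨Polynomial.aeval b P, Polynomial.aeval_mem_adjoin_singleton ℂ b, fun z hz => ?_, ?_⟩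
  · rw [haeval]
    exact (norm_sub_le _ _).trans (add_le_add (hK _ (hb1 hz)) (hP _ (hb1 hz)))
  · rw [haeval]
    exact hle

lemma comp_mul_pow_mem_hpClosure {p : ℝ} (hp : 0 < p) (hh : MemHinf h)
    (hb : DifferentiableOn ℂ b uDisk) (hb1 : MapsTo b uDisk uDisk) (hb0 : b 0 = 0)
    {g : ℂ → ℂ} (hg : MemHinf g) (m : ℕ) :
    (fun z => h (b z) * g z ^ m) ∈ hpClosure p (Algebra.adjoin ℂ {b, g} : Set (ℂ → ℂ)) := by
  have hgm : g ^ m ∈ Algebra.adjoin ℂ {b, g} :=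
    pow_mem (Algebra.subset_adjoin (by simp)) m
  have hle : Algebra.adjoin ℂ {b} ≤ Algebra.adjoin ℂ {b, g} :=
    Algebra.adjoin_mono (by simp)
  have hbg (u : ℂ → ℂ) (hu : u ∈ Algebra.adjoin ℂ {b, g}) : MemHp p u :=
    memHp_of_mem_adjoin_pair hp (memHinf_of_mapsTo hb hb1) hg hu
  have hmul (u : ℂ → ℂ) (hu : u ∈ Algebra.adjoin ℂ {b}) : g ^ m * u ∈ Algebra.adjoin ℂ {b, g} :=
    mul_mem hgm (hle hu)
  have hcomm : (fun z => h (b z) * g z ^ m) = g ^ m * (h ∘ b) := funext fun z => mul_comm _ _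
  rw [hcomm]
  exact mul_mem_hpClosure hp (fun u hu => hbg u (hle hu)) hbg (hg.pow m) hmul
    (comp_mem_hpClosure hp hh hb hb1 hb0)

end PolynomialApproximation

/-! ### Finite Blaschke products -/

section Blaschke

variable {n : ℕ} {a : Fin n → ℂ} {α z w : ℂ}

lemma sq_norm_one_sub_conj_mul_sub_sq_norm_sub (α z : ℂ) :
    ‖1 - (starRingEnd ℂ) α * z‖ ^ 2 - ‖α - z‖ ^ 2 = (1 - ‖α‖ ^ 2) * (1 - ‖z‖ ^ 2) := by
  simp only [Complex.sq_norm, Complex.normSq_apply, Complex.sub_re, Complex.sub_im,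
    Complex.mul_re, Complex.mul_im, Complex.conj_re, Complex.conj_im, Complex.one_re,
    Complex.one_im]
  ring

lemma norm_sub_lt_norm_one_sub_conj_mul (hα : ‖α‖ < 1) (hz : ‖z‖ < 1) :
    ‖α - z‖ < ‖1 - (starRingEnd ℂ) α * z‖ := by
  refine lt_of_pow_lt_pow_left₀ 2 (norm_nonneg _) ?_
  have hpos : 0 < (1 - ‖α‖ ^ 2) * (1 - ‖z‖ ^ 2) :=
    mul_pos (by nlinarith [norm_nonneg α]) (by nlinarith [norm_nonneg z])
  linarith [sq_norm_one_sub_conj_mul_sub_sq_norm_sub α z]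

lemma norm_one_sub_conj_mul_le_norm_sub (hα : ‖α‖ ≤ 1) (hz : 1 ≤ ‖z‖) :
    ‖1 - (starRingEnd ℂ) α * z‖ ≤ ‖α - z‖ := by
  refine le_of_sq_le_sq ?_ (norm_nonneg _)
  have hnonpos : (1 - ‖α‖ ^ 2) * (1 - ‖z‖ ^ 2) ≤ 0 :=
    mul_nonpos_of_nonneg_of_nonpos (by nlinarith [norm_nonneg α]) (by nlinarith)
  linarith [sq_norm_one_sub_conj_mul_sub_sq_norm_sub α z]

/-- The numerator `∏_j (a_j - X)` of the Blaschke product with zeros `a`. -/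
def blaschkeNum (a : Fin n → ℂ) : ℂ[X] := ∏ j, (C (a j) - X)

/-- The denominator `∏_j (1 - conj(a_j) X)` of the Blaschke product with zeros `a`. -/
def blaschkeDen (a : Fin n → ℂ) : ℂ[X] := ∏ j, (1 - C ((starRingEnd ℂ) (a j)) * X)

/-- The polynomial whose roots are the solutions of `B = w`, counted with multiplicity. -/
def fiberPoly (a : Fin n → ℂ) (w : ℂ) : ℂ[X] := blaschkeNum a - C w * blaschkeDen a

lemma fiberMS_eq_roots (a : Fin n → ℂ) (z : ℂ) :
    fiberMS a z = (fiberPoly a (blaschke a z)).roots := rfl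

lemma eval_blaschkeNum (a : Fin n → ℂ) (z : ℂ) : (blaschkeNum a).eval z = ∏ j, (a j - z) := by
  simp [blaschkeNum, Polynomial.eval_prod]

lemma eval_blaschkeDen (a : Fin n → ℂ) (z : ℂ) :
    (blaschkeDen a).eval z = ∏ j, (1 - (starRingEnd ℂ) (a j) * z) := by
  simp [blaschkeDen, Polynomial.eval_prod]

lemma eval_fiberPoly_eq_zero_iff :
    (fiberPoly a w).eval z = 0 ↔ (blaschkeNum a).eval z = w * (blaschkeDen a).eval z := by
  simp [fiberPoly, sub_eq_zero]

lemma blaschke_eq_div (a : Fin n → ℂ) :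
    blaschke a = fun z => (blaschkeNum a).eval z / (blaschkeDen a).eval z := by
  ext z
  rw [eval_blaschkeNum, eval_blaschkeDen, blaschke, Finset.prod_div_distrib]

lemma eval_blaschkeDen_ne_zero (ha : ∀ j, a j ∈ uDisk) (hz : z ∈ uDisk) :
    (blaschkeDen a).eval z ≠ 0 := by
  rw [eval_blaschkeDen]
  exact Finset.prod_ne_zero_iff.2 fun j _ => norm_pos_iff.1 <| (norm_nonneg _).trans_lt <|
    norm_sub_lt_norm_one_sub_conj_mul (mem_ball_zero_iff.1 (ha j)) (mem_ball_zero_iff.1 hz)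

lemma differentiableOn_blaschke (ha : ∀ j, a j ∈ uDisk) :
    DifferentiableOn ℂ (blaschke a) uDisk := by
  rw [blaschke_eq_div]
  exact (blaschkeNum a).differentiable.differentiableOn.div
    (blaschkeDen a).differentiable.differentiableOn fun z hz => eval_blaschkeDen_ne_zero ha hz

lemma blaschke_zero {i : Fin n} (hi : a i = 0) : blaschke a 0 = 0 :=
  Finset.prod_eq_zero (Finset.mem_univ i) (by simp [hi])

lemma mapsTo_blaschke [NeZero n] (ha : ∀ j, a j ∈ uDisk) :
    MapsTo (blaschke a) uDisk uDisk := by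
  intro z hz
  have hfactor : ∀ j, ‖(a j - z) / (1 - (starRingEnd ℂ) (a j) * z)‖ < 1 := fun j => by
    have hlt := norm_sub_lt_norm_one_sub_conj_mul (mem_ball_zero_iff.1 (ha j))
      (mem_ball_zero_iff.1 hz)
    rw [norm_div]
    exact (div_lt_one ((norm_nonneg _).trans_lt hlt)).2 hlt
  rw [uDisk, mem_ball_zero_iff, blaschke, norm_prod,
    ← Finset.mul_prod_erase _ _ (Finset.mem_univ (0 : Fin n))]
  exact (mul_le_of_le_one_right (norm_nonneg _) (Finset.prod_le_one (fun _ _ => norm_nonneg _)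
    fun j _ => (hfactor j).le)).trans_lt (hfactor 0)

lemma memHinf_blaschke [NeZero n] (ha : ∀ j, a j ∈ uDisk) : MemHinf (blaschke a) :=
  memHinf_of_mapsTo (differentiableOn_blaschke ha) (mapsTo_blaschke ha)

lemma isCoprime_blaschkeNum_blaschkeDen (ha : ∀ j, a j ∈ uDisk) :
    IsCoprime (blaschkeNum a) (blaschkeDen a) := by
  refine (Polynomial.isCoprime_iff_aeval_ne_zero_of_isAlgClosed ℂ ℂ _ _).2 fun z => ?_
  simp only [Polynomial.coe_aeval_eq_eval]
  refine or_iff_not_imp_left.2 fun hnum => ?_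
  rw [not_not, eval_blaschkeNum, Finset.prod_eq_zero_iff] at hnum
  obtain ⟨j, -, hj⟩ := hnum
  exact eval_blaschkeDen_ne_zero ha (sub_eq_zero.1 hj ▸ ha j)

end Blaschke

/-! ### Fibers over regular values -/

section Fibers

variable {n : ℕ} {a : Fin n → ℂ} {z w ζ : ℂ}

lemma natDegree_fiberPoly_le (a : Fin n → ℂ) (w : ℂ) : (fiberPoly a w).natDegree ≤ n := by
  have hprod : ∀ P : Fin n → ℂ[X], (∀ j, (P j).natDegree ≤ 1) → (∏ j, P j).natDegree ≤ n :=
    fun P hP => (Polynomial.natDegree_prod_le _ _).trans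
      ((Finset.sum_le_sum fun j _ => hP j).trans_eq (by simp))
  refine (Polynomial.natDegree_sub_le_of_le (hprod _ fun j => ?_)
    ((Polynomial.natDegree_C_mul_le _ _).trans (hprod _ fun j => ?_))).trans_eq (max_self n) <;>
  compute_degree

lemma coeff_fiberPoly (a : Fin n → ℂ) (w : ℂ) :
    (fiberPoly a w).coeff n = (-1) ^ n - w * ∏ j, -(starRingEnd ℂ) (a j) := by
  have hprod : ∀ P : Fin n → ℂ[X], (∀ j, (P j).natDegree ≤ 1) →
      (∏ j, P j).coeff n = ∏ j, (P j).coeff 1 := fun P hP => by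
    simpa using Polynomial.coeff_prod_of_natDegree_le Finset.univ P 1 fun j _ => hP j
  rw [fiberPoly, Polynomial.coeff_sub, Polynomial.coeff_C_mul, blaschkeNum, blaschkeDen,
    hprod _ fun j => by compute_degree, hprod _ fun j => by compute_degree]
  simp [Polynomial.coeff_one]

lemma coeff_fiberPoly_ne_zero (ha : ∀ j, a j ∈ uDisk) (hw : w ∈ uDisk) :
    (fiberPoly a w).coeff n ≠ 0 := by
  rw [coeff_fiberPoly, sub_ne_zero]
  intro heq
  have hle : ∏ j, ‖-(starRingEnd ℂ) (a j)‖ ≤ 1 :=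
    Finset.prod_le_one (fun _ _ => norm_nonneg _) fun j _ => by
      simpa using (mem_ball_zero_iff.1 (ha j)).le
  have hnorm : 1 = ‖w‖ * ∏ j, ‖-(starRingEnd ℂ) (a j)‖ := by
    simpa [norm_prod] using congrArg norm heq
  exact (mem_ball_zero_iff.1 hw).not_ge
    (hnorm.trans_le (mul_le_of_le_one_right (norm_nonneg w) hle))

lemma natDegree_fiberPoly (ha : ∀ j, a j ∈ uDisk) (hw : w ∈ uDisk) :
    (fiberPoly a w).natDegree = n :=
  Polynomial.natDegree_eq_of_le_of_coeff_ne_zero (natDegree_fiberPoly_le a w)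
    (coeff_fiberPoly_ne_zero ha hw)

lemma fiberPoly_ne_zero (ha : ∀ j, a j ∈ uDisk) (hw : w ∈ uDisk) : fiberPoly a w ≠ 0 :=
  fun hzero => coeff_fiberPoly_ne_zero ha hw (by simp [hzero])

lemma card_roots_fiberPoly (ha : ∀ j, a j ∈ uDisk) (hw : w ∈ uDisk) :
    Multiset.card (fiberPoly a w).roots = n := by
  rw [← (IsAlgClosed.splits (fiberPoly a w)).natDegree_eq_card_roots, natDegree_fiberPoly ha hw]

lemma mem_uDisk_of_mem_roots_fiberPoly (ha : ∀ j, a j ∈ uDisk) (hw : w ∈ uDisk)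
    (hζ : ζ ∈ (fiberPoly a w).roots) : ζ ∈ uDisk := by
  have heq := eval_fiberPoly_eq_zero_iff.1 (Polynomial.isRoot_of_mem_roots hζ)
  by_contra hout
  have hle : ‖(blaschkeDen a).eval ζ‖ ≤ ‖(blaschkeNum a).eval ζ‖ := by
    rw [eval_blaschkeNum, eval_blaschkeDen, norm_prod, norm_prod]
    exact Finset.prod_le_prod (fun _ _ => norm_nonneg _) fun j _ =>
      norm_one_sub_conj_mul_le_norm_sub (mem_ball_zero_iff.1 (ha j)).le
        (by simpa [uDisk] using hout)
  have hden : (blaschkeDen a).eval ζ = 0 := by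
    rw [heq, norm_mul] at hle
    refine norm_eq_zero.1 ?_
    nlinarith [norm_nonneg ((blaschkeDen a).eval ζ), mem_ball_zero_iff.1 hw]
  have hcop := (Polynomial.isCoprime_iff_aeval_ne_zero_of_isAlgClosed ℂ ℂ _ _).1
    (isCoprime_blaschkeNum_blaschkeDen ha) ζ
  simp [heq, hden] at hcop

lemma mem_roots_fiberPoly_iff (ha : ∀ j, a j ∈ uDisk) (hw : w ∈ uDisk) :
    ζ ∈ (fiberPoly a w).roots ↔ ζ ∈ uDisk ∧ blaschke a ζ = w := by
  have hiff (hζ : ζ ∈ uDisk) : (fiberPoly a w).eval ζ = 0 ↔ blaschke a ζ = w := by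
    rw [eval_fiberPoly_eq_zero_iff, blaschke_eq_div, div_eq_iff (eval_blaschkeDen_ne_zero ha hζ)]
  rw [Polynomial.mem_roots (fiberPoly_ne_zero ha hw)]
  refine ⟨fun hroot => ?_, fun hζ => (hiff hζ.1).2 hζ.2⟩
  have hmem := mem_uDisk_of_mem_roots_fiberPoly ha hw
    ((Polynomial.mem_roots (fiberPoly_ne_zero ha hw)).2 hroot)
  exact ⟨hmem, (hiff hmem).1 hroot⟩

/-- A finite set containing the critical values of `B` in the disk. It consists of the values of
`B` at all zeros of the Wronskian of numerator and denominator, including zeros outside the disk. -/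
def critVals (a : Fin n → ℂ) : Finset ℂ :=
  (Polynomial.wronskian (blaschkeNum a) (blaschkeDen a)).roots.toFinset.image (blaschke a)

lemma wronskian_blaschkeNum_blaschkeDen_ne_zero [NeZero n] (ha : ∀ j, a j ∈ uDisk) :
    Polynomial.wronskian (blaschkeNum a) (blaschkeDen a) ≠ 0 := by
  intro hzero
  have hderiv := ((isCoprime_blaschkeNum_blaschkeDen ha).wronskian_eq_zero_iff.1 hzero).1
  have hdeg := natDegree_fiberPoly ha zero_mem_uDisk
  rw [fiberPoly, map_zero, zero_mul, sub_zero, Polynomial.derivative_eq_zero.1 hderiv] at hdeg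
  exact NeZero.ne n hdeg.symm

lemma eval_wronskian_ne_zero [NeZero n] (ha : ∀ j, a j ∈ uDisk)
    (hζ : blaschke a ζ ∉ critVals a) :
    (Polynomial.wronskian (blaschkeNum a) (blaschkeDen a)).eval ζ ≠ 0 := fun hzero =>
  hζ (Finset.mem_image.2 ⟨ζ, Multiset.mem_toFinset.2
    ((Polynomial.mem_roots (wronskian_blaschkeNum_blaschkeDen_ne_zero ha)).2 hzero), rfl⟩)

lemma nodup_roots_fiberPoly [NeZero n] (ha : ∀ j, a j ∈ uDisk) (hw : w ∈ uDisk)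
    (hwc : w ∉ critVals a) : (fiberPoly a w).roots.Nodup := by
  rw [Multiset.nodup_iff_count_le_one]
  intro ζ
  rw [Polynomial.count_roots]
  by_contra! hmult
  have hP := fiberPoly_ne_zero ha hw
  obtain ⟨hroot, hroot'⟩ := (Polynomial.one_lt_rootMultiplicity_iff_isRoot hP).1 hmult
  have hB := ((mem_roots_fiberPoly_iff ha hw).1 ((Polynomial.mem_roots hP).2 hroot)).2
  refine eval_wronskian_ne_zero ha (ζ := ζ) (by rwa [hB]) ?_
  simp only [fiberPoly, Polynomial.IsRoot, Polynomial.derivative_sub, Polynomial.eval_sub,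
    Polynomial.eval_mul, Polynomial.eval_C, Polynomial.derivative_C_mul, sub_eq_zero]
    at hroot hroot'
  simp only [Polynomial.wronskian, Polynomial.eval_sub, Polynomial.eval_mul, hroot, hroot']
  ring

lemma deriv_blaschke_ne_zero [NeZero n] (ha : ∀ j, a j ∈ uDisk) (hζ : ζ ∈ uDisk)
    (hc : blaschke a ζ ∉ critVals a) : deriv (blaschke a) ζ ≠ 0 := by
  have hden := eval_blaschkeDen_ne_zero ha hζ
  have hderiv := ((blaschkeNum a).hasDerivAt ζ).fun_div ((blaschkeDen a).hasDerivAt ζ) hden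
  rw [blaschke_eq_div, hderiv.deriv]
  refine div_ne_zero (fun hzero => eval_wronskian_ne_zero ha hc ?_) (pow_ne_zero 2 hden)
  simp only [Polynomial.wronskian, Polynomial.eval_sub, Polynomial.eval_mul]
  linear_combination -hzero

lemma finite_uDisk_inter_preimage_critVals [NeZero n] (ha : ∀ j, a j ∈ uDisk) :
    (uDisk ∩ blaschke a ⁻¹' critVals a).Finite := by
  refine ((critVals a).biUnion fun v => (fiberPoly a v).roots.toFinset).finite_toSet.subset ?_
  rintro z ⟨hz, hzc⟩
  exact Finset.mem_biUnion.2 ⟨_, hzc, Multiset.mem_toFinset.2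
    ((mem_roots_fiberPoly_iff ha (mapsTo_blaschke ha hz)).2 ⟨hz, rfl⟩)⟩

/-- `x` lists the `n` distinct points of the disk at which `B` takes the value `w`. -/
structure IsFiberEnum (a : Fin n → ℂ) (w : ℂ) (x : Fin n → ℂ) : Prop where
  mem_uDisk : ∀ i, x i ∈ uDisk
  blaschke_eq : ∀ i, blaschke a (x i) = w
  injective : Function.Injective x

namespace IsFiberEnum

variable {x : Fin n → ℂ}

lemma roots_eq [NeZero n] (hx : IsFiberEnum a w x) (ha : ∀ j, a j ∈ uDisk) :
    (fiberPoly a w).roots = Finset.univ.val.map x := by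
  have hw : w ∈ uDisk := hx.blaschke_eq 0 ▸ mapsTo_blaschke ha (hx.mem_uDisk 0)
  refine (Multiset.eq_of_le_of_card_le ?_ ?_).symm
  · rw [Multiset.le_iff_subset (Finset.univ.nodup.map hx.injective)]
    intro y hy
    obtain ⟨i, -, rfl⟩ := Multiset.mem_map.1 hy
    exact (mem_roots_fiberPoly_iff ha hw).2 ⟨hx.mem_uDisk i, hx.blaschke_eq i⟩
  · simp [card_roots_fiberPoly ha hw]

lemma exists_eq [NeZero n] (hx : IsFiberEnum a w x) (ha : ∀ j, a j ∈ uDisk) (hz : z ∈ uDisk)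
    (hzw : blaschke a z = w) : ∃ i, x i = z := by
  have hmem : z ∈ (fiberPoly a w).roots :=
    (mem_roots_fiberPoly_iff ha (hzw ▸ mapsTo_blaschke ha hz)).2 ⟨hz, hzw⟩
  simpa [hx.roots_eq ha] using hmem

lemma calD_eq_prod [NeZero n] (hx : IsFiberEnum a w x) (ha : ∀ j, a j ∈ uDisk) (f : ℂ → ℂ)
    (i : Fin n) : calD a f (x i) = ∏ j ∈ Finset.univ.erase i, (f (x i) - f (x j)) := by
  rw [calD, fiberMS_eq_roots, hx.blaschke_eq i, hx.roots_eq ha,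
    ← Multiset.map_erase_of_mem _ _ (Finset.mem_univ_val i), Multiset.map_map, ← Finset.erase_val]
  rfl

end IsFiberEnum

lemma exists_isFiberEnum [NeZero n] (ha : ∀ j, a j ∈ uDisk) (hw : w ∈ uDisk)
    (hwc : w ∉ critVals a) : ∃ x, IsFiberEnum a w x := by
  have hcard : (fiberPoly a w).roots.toFinset.card = n := by
    rw [Multiset.toFinset_card_of_nodup (nodup_roots_fiberPoly ha hw hwc),
      card_roots_fiberPoly ha hw]
  let e := (fiberPoly a w).roots.toFinset.equivFinOfCardEq hcard
  have hmem : ∀ i, (e.symm i : ℂ) ∈ uDisk ∧ blaschke a (e.symm i) = w := fun i =>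
    (mem_roots_fiberPoly_iff ha hw).1 (Multiset.mem_toFinset.1 (e.symm i).2)
  exact ⟨fun i => e.symm i, fun i => (hmem i).1, fun i => (hmem i).2,
    Subtype.val_injective.comp e.symm.injective⟩

lemma calD_id_ne_zero [NeZero n] (ha : ∀ j, a j ∈ uDisk) (hz : z ∈ uDisk)
    (hzc : blaschke a z ∉ critVals a) : calD a id z ≠ 0 := by
  obtain ⟨x, hx⟩ := exists_isFiberEnum ha (mapsTo_blaschke ha hz) hzc
  obtain ⟨i, rfl⟩ := hx.exists_eq ha hz rfl
  rw [hx.calD_eq_prod ha]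
  exact Finset.prod_ne_zero_iff.2 fun j hj =>
    sub_ne_zero.2 fun hij => Finset.ne_of_mem_erase hj (hx.injective hij).symm

lemma exists_analyticAt_rightInverse {𝕜 : Type*} [NontriviallyNormedField 𝕜] [CompleteSpace 𝕜]
    [CharZero 𝕜] {f : 𝕜 → 𝕜} {x : 𝕜} (hf : AnalyticAt 𝕜 f x) (hf' : deriv f x ≠ 0) :
    ∃ φ : 𝕜 → 𝕜, AnalyticAt 𝕜 φ (f x) ∧ φ (f x) = x ∧ ∀ᶠ y in 𝓝 (f x), f (φ y) = y :=
  ⟨hf.hasStrictDerivAt.localInverse _ _ _ hf', hf.analyticAt_localInverse hf',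
    HasStrictFDerivAt.localInverse_apply_image ..,
    HasStrictDerivAt.eventually_right_inverse hf.hasStrictDerivAt hf'⟩

lemma eventually_injective_of_continuousAt {ι X Y : Type*} [Finite ι] [TopologicalSpace X]
    [TopologicalSpace Y] [T2Space Y] {ψ : ι → X → Y} {x : X} (hψ : ∀ i, ContinuousAt (ψ i) x)
    (hx : Function.Injective fun i => ψ i x) :
    ∀ᶠ y in 𝓝 x, Function.Injective fun i => ψ i y := by
  have hne : ∀ i j, ∀ᶠ y in 𝓝 x, i ≠ j → ψ i y ≠ ψ j y := fun i j => by
    by_cases hij : i = j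
    · simp [hij]
    · filter_upwards [((hψ i).ne_iff_eventually_ne (hψ j)).1 (hx.ne hij)] with y hy _ using hy
  filter_upwards [eventually_all.2 fun i => eventually_all.2 (hne i)] with y hy i j hij
  exact not_imp_not.1 (hy i j) hij

lemma exists_analyticAt_isFiberEnum [NeZero n] (ha : ∀ j, a j ∈ uDisk) (hw : w ∈ uDisk)
    (hwc : w ∉ critVals a) :
    ∃ ψ : Fin n → ℂ → ℂ, (∀ i, AnalyticAt ℂ (ψ i) w) ∧
      ∀ᶠ v in 𝓝 w, IsFiberEnum a v fun i => ψ i v := by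
  obtain ⟨x, hx⟩ := exists_isFiberEnum ha hw hwc
  have hbranch : ∀ i, ∃ φ : ℂ → ℂ, AnalyticAt ℂ φ w ∧ φ w = x i ∧
      ∀ᶠ v in 𝓝 w, blaschke a (φ v) = v := fun i => by
    have han : AnalyticAt ℂ (blaschke a) (x i) :=
      (differentiableOn_blaschke ha).analyticAt (isOpen_ball.mem_nhds (hx.mem_uDisk i))
    simpa only [hx.blaschke_eq] using exists_analyticAt_rightInverse han
      (deriv_blaschke_ne_zero ha (hx.mem_uDisk i) (by rwa [hx.blaschke_eq]))
  choose ψ hψ hψx hψB using hbranch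
  refine ⟨ψ, hψ, ?_⟩
  have hmem : ∀ᶠ v in 𝓝 w, ∀ i, ψ i v ∈ uDisk := eventually_all.2 fun i =>
    (hψ i).continuousAt.eventually_mem (isOpen_ball.mem_nhds (by rw [hψx]; exact hx.mem_uDisk i))
  have hinj := eventually_injective_of_continuousAt (fun i => (hψ i).continuousAt)
    (by simpa only [hψx] using hx.injective)
  filter_upwards [hmem, eventually_all.2 hψB, hinj] with v hv hvB hvi using ⟨hv, hvB, hvi⟩

end Fibers

/-! ### If `Γ(g)` vanishes -/

section Vanishing

lemma exists_mem_eventually_eq_zero_of_prod {𝕜 ι : Type*} [NontriviallyNormedField 𝕜]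
    {s : Finset ι} {F : ι → 𝕜 → 𝕜} {w : 𝕜} (hF : ∀ i ∈ s, AnalyticAt 𝕜 (F i) w)
    (hprod : ∀ᶠ v in 𝓝 w, ∏ i ∈ s, F i v = 0) : ∃ i ∈ s, ∀ᶠ v in 𝓝 w, F i v = 0 := by
  by_contra hne
  have hne' : ∀ᶠ v in 𝓝[≠] w, ∀ i ∈ s, F i v ≠ 0 := s.eventually_all.2 fun i hi =>
    (hF i hi).eventually_eq_zero_or_eventually_ne_zero.resolve_left
      fun hzero => hne ⟨i, hi, hzero⟩
  obtain ⟨v, hv, hv0⟩ := (hne'.and (hprod.filter_mono nhdsWithin_le_nhds)).exists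
  exact Finset.prod_ne_zero_iff.2 hv hv0

lemma eqOn_zero_of_eventually_comp_eq_zero {𝕜 E : Type*} [NontriviallyNormedField 𝕜]
    [NormedAddCommGroup E] [NormedSpace 𝕜 E] {U : Set 𝕜} {f : 𝕜 → E} {b ψ : 𝕜 → 𝕜} {w : 𝕜}
    (hf : AnalyticOnNhd 𝕜 f U) (hU : IsPreconnected U) (hψ : ContinuousAt ψ w) (hψw : ψ w ∈ U)
    (hbψ : ∀ᶠ v in 𝓝 w, b (ψ v) = v) (hfψ : ∀ᶠ v in 𝓝 w, f (ψ v) = 0) : EqOn f 0 U := by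
  have htendsto : Tendsto ψ (𝓝[≠] w) (𝓝[≠] (ψ w)) := by
    refine tendsto_nhdsWithin_iff.2 ⟨hψ.tendsto.mono_left nhdsWithin_le_nhds, ?_⟩
    filter_upwards [self_mem_nhdsWithin, hbψ.filter_mono nhdsWithin_le_nhds] with v hvw hv heq
    exact hvw (hv.symm.trans ((congrArg b heq).trans hbψ.self_of_nhds))
  exact hf.eqOn_zero_of_preconnected_of_frequently_eq_zero hU hψw
    (htendsto.frequently (hfψ.filter_mono nhdsWithin_le_nhds).frequently)

lemma apply_eq_of_mem_adjoin {R A X : Type*} [CommSemiring R] [Semiring A] [Algebra R A]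
    {s : Set (X → A)} {u : X → A} (hu : u ∈ Algebra.adjoin R s) {x y : X}
    (hs : ∀ F ∈ s, F x = F y) : u x = u y := by
  have hle : Algebra.adjoin R s ≤
      AlgHom.equalizer (Pi.evalAlgHom R (fun _ : X => A) x) (Pi.evalAlgHom R _ y) :=
    Algebra.adjoin_le hs
  exact hle hu

variable {n : ℕ} {a : Fin n → ℂ} {f g : ℂ → ℂ} {p : ℝ}

lemma exists_branches_eventually_eq [NeZero n] (ha : ∀ j, a j ∈ uDisk)
    (hg : DifferentiableOn ℂ g uDisk) (hD : ∀ z ∈ uDisk, calD a g z = 0) :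
    ∃ (w : ℂ) (ψ : Fin n → ℂ → ℂ) (i j : Fin n), i ≠ j ∧ (∀ k, AnalyticAt ℂ (ψ k) w) ∧
      (∀ᶠ v in 𝓝 w, IsFiberEnum a v fun k => ψ k v) ∧ ∀ᶠ v in 𝓝 w, g (ψ i v) = g (ψ j v) := by
  have hinf : uDisk.Infinite := infinite_of_mem_nhds (0 : ℂ) (ball_mem_nhds 0 one_pos)
  obtain ⟨w, hw, hwc⟩ := hinf.exists_notMem_finset (critVals a)
  obtain ⟨ψ, hψ, hψenum⟩ := exists_analyticAt_isFiberEnum ha hw hwc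
  have hgψ : ∀ k, AnalyticAt ℂ (fun v => g (ψ k v)) w := fun k =>
    (hg.analyticAt (isOpen_ball.mem_nhds (hψenum.self_of_nhds.mem_uDisk k))).comp (hψ k)
  have hprod : ∀ᶠ v in 𝓝 w, ∏ j ∈ Finset.univ.erase 0, (g (ψ 0 v) - g (ψ j v)) = 0 := by
    filter_upwards [hψenum] with v hv
    rw [← hv.calD_eq_prod ha g 0, hD _ (hv.mem_uDisk 0)]
  obtain ⟨j, hj, hj0⟩ := exists_mem_eventually_eq_zero_of_prod
    (fun j _ => (hgψ 0).sub (hgψ j)) hprod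
  exact ⟨w, ψ, 0, j, (Finset.ne_of_mem_erase hj).symm, hψ, hψenum,
    hj0.mono fun v hv => sub_eq_zero.1 hv⟩

lemma eqOn_zero_of_mem_isZInvSubspace [NeZero n] (ha : ∀ j, a j ∈ uDisk) (hg : MemHinf g)
    (hp : 0 < p) (hD : ∀ z ∈ uDisk, calD a g z = 0) {M : Set (ℂ → ℂ)} (hM : IsZInvSubspace p M)
    (hMs : M ⊆ hpClosure p (Algebra.adjoin ℂ {blaschke a, g} : Set (ℂ → ℂ))) (hf : f ∈ M) :
    EqOn f 0 uDisk := by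
  obtain ⟨hMp, -, -, -, hMz, -⟩ := hM
  obtain ⟨w, ψ, i, j, hij, hψ, hψenum, hgψ⟩ := exists_branches_eventually_eq ha hg.1 hD
  have hadjoin : ∀ u ∈ (Algebra.adjoin ℂ {blaschke a, g} : Set (ℂ → ℂ)), MemHp p u := fun u hu =>
    memHp_of_mem_adjoin_pair hp (memHinf_blaschke ha) hg hu
  have hfψ : ∀ᶠ v in 𝓝 w, f (ψ i v) = 0 := by
    filter_upwards [hgψ, hψenum] with v hgv hv
    have hagree : ∀ h ∈ M, h (ψ i v) = h (ψ j v) := fun h hh =>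
      eq_of_mem_hpClosure hp hadjoin (hMs hh) (hv.mem_uDisk i) (hv.mem_uDisk j) fun u hu =>
        apply_eq_of_mem_adjoin hu (by simp [hv.blaschke_eq, hgv])
    -- Both `f` and `z f` agree at the distinct points `ψ i v` and `ψ j v`, so `f` vanishes there.
    have hzf : ψ i v * f (ψ i v) = ψ j v * f (ψ j v) := hagree _ (hMz f hf)
    refine (mul_eq_zero.1 ?_).resolve_left (sub_ne_zero.2 (hv.injective.ne hij))
    linear_combination hzf - ψ j v * hagree f hf
  exact eqOn_zero_of_eventually_comp_eq_zero ((hMp f hf).1.analyticOnNhd isOpen_ball)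
    (convex_ball (0 : ℂ) 1).isPreconnected (hψ i).continuousAt
    (hψenum.self_of_nhds.mem_uDisk i) (hψenum.mono fun v hv => hv.blaschke_eq i) hfψ

end Vanishing

/-! ### Interpolation along the fibers -/

section Interpolation

/-- The polynomial `∑_{i ∈ s} f_i ∏_{j ∈ s, j ≠ i} (X - g_j)`, which takes the value
`f_i ∏_{j ≠ i} (g_i - g_j)` at `g_i`: Lagrange interpolation without the divisions, so that the
nodes `g_i` may coincide. -/
def interpPoly {R ι : Type*} [CommRing R] [DecidableEq ι] (s : Finset ι) (f g : ι → R) : R[X] :=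
  ∑ i ∈ s, C (f i) * Lagrange.nodal (s.erase i) g

section interpPoly

variable {R S ι κ : Type*} [CommRing R] [CommRing S] [DecidableEq ι] [DecidableEq κ]

lemma eval_interpPoly {s : Finset ι} (f g : ι → R) {i : ι} (hi : i ∈ s) :
    (interpPoly s f g).eval (g i) = f i * ∏ j ∈ s.erase i, (g i - g j) := by
  rw [interpPoly, Polynomial.eval_finsetSum, Finset.sum_eq_single_of_mem i hi fun k _ hki => ?_]
  · rw [Polynomial.eval_mul, Polynomial.eval_C, Lagrange.eval_nodal]
  · rw [Polynomial.eval_mul,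
      Lagrange.eval_nodal_at_node (Finset.mem_erase.2 ⟨hki.symm, hi⟩), mul_zero]

lemma natDegree_interpPoly_lt [Nontrivial R] {s : Finset ι} (hs : s.Nonempty) (f g : ι → R) :
    (interpPoly s f g).natDegree < s.card := by
  refine Nat.lt_of_le_pred hs.card_pos (Polynomial.natDegree_sum_le_of_forall_le _ _ fun i hi => ?_)
  refine (Polynomial.natDegree_C_mul_le _ _).trans_eq ?_
  rw [Lagrange.natDegree_nodal, Finset.card_erase_of_mem hi, Nat.pred_eq_sub_one]

lemma interpPoly_finsetMap (s : Finset κ) (e : κ ↪ ι) (f g : ι → R) :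
    interpPoly (s.map e) f g = interpPoly s (fun i => f (e i)) fun i => g (e i) := by
  simp only [interpPoly, Finset.sum_map, ← Finset.map_erase, Lagrange.nodal_eq, Finset.prod_map]

lemma map_interpPoly (φ : R →+* S) (s : Finset ι) (f g : ι → R) :
    (interpPoly s f g).map φ = interpPoly s (fun i => φ (f i)) fun i => φ (g i) := by
  simp only [interpPoly, Polynomial.map_sum, Polynomial.map_mul, Polynomial.map_C,
    Lagrange.nodal_eq, Polynomial.map_prod, Polynomial.map_sub, Polynomial.map_X]

lemma exists_mvPolynomial_coeff_interpPoly (s : Finset ι) (k : ℕ) :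
    ∃ P : MvPolynomial (ι ⊕ ι) R, ∀ f g : ι → R,
      (interpPoly s f g).coeff k = MvPolynomial.eval (Sum.elim f g) P := by
  refine ⟨(interpPoly s (fun i => MvPolynomial.X (Sum.inl i))
    fun i => MvPolynomial.X (Sum.inr i)).coeff k, fun f g => ?_⟩
  rw [← Polynomial.coeff_map, map_interpPoly]
  simp

end interpPoly

lemma exists_norm_eval_mvPolynomial_le {σ : Type*} (P : MvPolynomial σ ℂ) (C : ℝ) :
    ∃ K : ℝ, ∀ x : σ → ℂ, (∀ i, ‖x i‖ ≤ C) → ‖MvPolynomial.eval x P‖ ≤ K := by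
  obtain ⟨K, hK⟩ := (isCompact_univ_pi fun _ : σ =>
    isCompact_closedBall (0 : ℂ) C).exists_bound_of_continuousOn P.continuous_eval.continuousOn
  exact ⟨K, fun x hx => hK x fun i _ => mem_closedBall_zero_iff.2 (hx i)⟩

lemma subset_closure_sdiff_of_finite {X : Type*} [TopologicalSpace X] [T1Space X]
    [∀ x : X, NeBot (𝓝[≠] x)] {U S : Set X} (hU : IsOpen U) (hS : S.Finite) :
    U ⊆ closure (U \ S) := by
  simpa [sdiff_eq, univ_inter] using (dense_univ.sdiff_finite hS).open_subset_closure_inter hU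

lemma exists_differentiableOn_eqOn_sdiff {U S : Set ℂ} {c : ℂ → ℂ} {C : ℝ} (hU : IsOpen U)
    (hS : S.Finite) (hc : DifferentiableOn ℂ c (U \ S)) (hC : ∀ z ∈ U \ S, ‖c z‖ ≤ C) :
    ∃ c' : ℂ → ℂ, DifferentiableOn ℂ c' U ∧ EqOn c' c (U \ S) := by
  have hopen : IsOpen (U \ S) := hU.sdiff hS.isClosed
  have hlim : EqOn (fun z => limUnder (𝓝[≠] z) c) c (U \ S) := fun z hz =>
    ((hc.continuousOn.continuousAt (hopen.mem_nhds hz)).tendsto.mono_left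
      nhdsWithin_le_nhds).limUnder_eq
  refine ⟨fun z => limUnder (𝓝[≠] z) c, fun z hz => ?_, hlim⟩
  let V : Set ℂ := U \ (S \ {z})
  have hV : V ∈ 𝓝 z := (hU.sdiff hS.sdiff.isClosed).mem_nhds ⟨hz, by simp⟩
  have hVz : V \ {z} ⊆ U \ S := fun y hy => ⟨hy.1.1, fun hyS => hy.1.2 ⟨hyS, hy.2⟩⟩
  have hupdate := Complex.differentiableOn_update_limUnder_of_bddAbove hV (hc.mono hVz)
    ⟨C, by rintro _ ⟨y, hy, rfl⟩; exact hC y (hVz hy)⟩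
  refine ((hupdate.differentiableAt hV).congr_of_eventuallyEq ?_).differentiableWithinAt
  filter_upwards [hV] with y hy
  rcases eq_or_ne y z with rfl | hyz
  · rw [Function.update_self]
  · rw [Function.update_of_ne hyz]
    exact hlim (hVz ⟨hy, hyz⟩)

lemma exists_memHinf_eqOn_sdiff {S : Set ℂ} {c : ℂ → ℂ} {C : ℝ} (hS : S.Finite)
    (hc : DifferentiableOn ℂ c (uDisk \ S)) (hC : ∀ z ∈ uDisk \ S, ‖c z‖ ≤ C) :
    ∃ c' : ℂ → ℂ, MemHinf c' ∧ EqOn c' c (uDisk \ S) := by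
  obtain ⟨c', hc', heq⟩ := exists_differentiableOn_eqOn_sdiff isOpen_ball hS hc hC
  refine ⟨c', ⟨hc', C, fun z hz => ?_⟩, heq⟩
  have hmem := ((hc'.continuousOn z hz).mono sdiff_subset).mem_closure
    (subset_closure_sdiff_of_finite isOpen_ball hS hz)
    (t := closedBall 0 C) fun y hy => mem_closedBall_zero_iff.2 ((heq hy).symm ▸ hC y hy)
  rwa [isClosed_closedBall.closure_eq, mem_closedBall_zero_iff] at hmem

variable {n : ℕ} {a : Fin n → ℂ} {f g : ℂ → ℂ} {w z : ℂ}

/-- The interpolation polynomial of the values of `f` and `g` on the fiber of `B` over `w`.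
It is meaningful for regular values `w` only, since multiplicities are ignored. -/
def fiberInterpPoly (a : Fin n → ℂ) (f g : ℂ → ℂ) (w : ℂ) : ℂ[X] :=
  interpPoly (fiberPoly a w).roots.toFinset f g

lemma IsFiberEnum.fiberInterpPoly_eq [NeZero n] {x : Fin n → ℂ} (hx : IsFiberEnum a w x)
    (ha : ∀ j, a j ∈ uDisk) (f g : ℂ → ℂ) :
    fiberInterpPoly a f g w = interpPoly Finset.univ (fun i => f (x i)) fun i => g (x i) := by
  have hroots : (fiberPoly a w).roots.toFinset = Finset.univ.map ⟨x, hx.injective⟩ := by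
    ext y
    simp [hx.roots_eq ha]
  rw [fiberInterpPoly, hroots, interpPoly_finsetMap, Function.Embedding.coeFn_mk]

lemma sum_coeff_fiberInterpPoly_mul_pow [NeZero n] (ha : ∀ j, a j ∈ uDisk) (f g : ℂ → ℂ)
    (hz : z ∈ uDisk) (hzc : blaschke a z ∉ critVals a) :
    ∑ k ∈ Finset.range n, (fiberInterpPoly a f g (blaschke a z)).coeff k * g z ^ k =
      f z * calD a g z := by
  obtain ⟨x, hx⟩ := exists_isFiberEnum ha (mapsTo_blaschke ha hz) hzc
  obtain ⟨i, hi⟩ := hx.exists_eq ha hz rfl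
  have hdeg : (fiberInterpPoly a f g (blaschke a z)).natDegree < n := by
    rw [hx.fiberInterpPoly_eq ha]
    simpa using natDegree_interpPoly_lt Finset.univ_nonempty (fun i => f (x i)) fun i => g (x i)
  rw [← Polynomial.eval_eq_sum_range' hdeg, hx.fiberInterpPoly_eq ha, ← hi, hx.calD_eq_prod ha]
  exact eval_interpPoly (fun i => f (x i)) (fun i => g (x i)) (Finset.mem_univ i)

lemma differentiableOn_coeff_fiberInterpPoly [NeZero n] (ha : ∀ j, a j ∈ uDisk)
    (hf : DifferentiableOn ℂ f uDisk) (hg : DifferentiableOn ℂ g uDisk) (k : ℕ) :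
    DifferentiableOn ℂ (fun w => (fiberInterpPoly a f g w).coeff k) (uDisk \ critVals a) := by
  rintro w ⟨hw, hwc⟩
  obtain ⟨ψ, hψ, hψenum⟩ := exists_analyticAt_isFiberEnum ha hw hwc
  obtain ⟨P, hP⟩ := exists_mvPolynomial_coeff_interpPoly (R := ℂ) (Finset.univ : Finset (Fin n)) k
  have hcomp : ∀ h : ℂ → ℂ, DifferentiableOn ℂ h uDisk → ∀ i,
      AnalyticAt ℂ (fun v => h (ψ i v)) w := fun h hh i =>
    (hh.analyticAt (isOpen_ball.mem_nhds (hψenum.self_of_nhds.mem_uDisk i))).comp (hψ i)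
  have hanalytic : AnalyticAt ℂ
      (fun v => MvPolynomial.eval (Sum.elim (fun i => f (ψ i v)) fun i => g (ψ i v)) P) w := by
    simp only [← MvPolynomial.coe_aeval_eq_eval]
    exact AnalyticAt.aeval_mvPolynomial (Sum.rec (hcomp f hf) (hcomp g hg)) P
  refine (hanalytic.differentiableAt.congr_of_eventuallyEq ?_).differentiableWithinAt
  filter_upwards [hψenum] with v hv
  rw [hv.fiberInterpPoly_eq ha, hP]

lemma exists_norm_coeff_fiberInterpPoly_le [NeZero n] (ha : ∀ j, a j ∈ uDisk) {A : ℝ}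
    (hf : ∀ z ∈ uDisk, ‖f z‖ ≤ A) (hg : ∀ z ∈ uDisk, ‖g z‖ ≤ A) (k : ℕ) :
    ∃ K : ℝ, ∀ w ∈ uDisk \ critVals a, ‖(fiberInterpPoly a f g w).coeff k‖ ≤ K := by
  obtain ⟨P, hP⟩ := exists_mvPolynomial_coeff_interpPoly (R := ℂ) (Finset.univ : Finset (Fin n)) k
  obtain ⟨K, hK⟩ := exists_norm_eval_mvPolynomial_le P A
  refine ⟨K, fun w hw => ?_⟩
  obtain ⟨x, hx⟩ := exists_isFiberEnum ha hw.1 hw.2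
  rw [hx.fiberInterpPoly_eq ha, hP]
  exact hK _ (Sum.rec (fun i => hf _ (hx.mem_uDisk i)) fun i => hg _ (hx.mem_uDisk i))

lemma exists_memHinf_eqOn_coeff_fiberInterpPoly [NeZero n] (ha : ∀ j, a j ∈ uDisk)
    (hf : MemHinf f) (hg : MemHinf g) (k : ℕ) :
    ∃ c : ℂ → ℂ, MemHinf c ∧
      EqOn c (fun w => (fiberInterpPoly a f g w).coeff k) (uDisk \ critVals a) := by
  obtain ⟨A, hA⟩ := hf.2
  obtain ⟨D, hD⟩ := hg.2
  obtain ⟨K, hK⟩ := exists_norm_coeff_fiberInterpPoly_le ha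
    (fun z hz => (hA z hz).trans (le_max_left A D))
    (fun z hz => (hD z hz).trans (le_max_right A D)) k
  exact exists_memHinf_eqOn_sdiff (critVals a).finite_toSet
    (differentiableOn_coeff_fiberInterpPoly ha hf.1 hg.1 k) hK

end Interpolation

/-! ### Nonvanishing of `Γ(g)` -/

section Nonvanishing

variable {n : ℕ} {a : Fin n → ℂ} {f g u v : ℂ → ℂ} {p : ℝ}

lemma eqOn_uDisk_of_forall_notMem_critVals [NeZero n] (ha : ∀ j, a j ∈ uDisk)
    (hu : ContinuousOn u uDisk) (hv : ContinuousOn v uDisk)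
    (huv : ∀ z ∈ uDisk, blaschke a z ∉ critVals a → u z = v z) : EqOn u v uDisk :=
  Set.EqOn.of_subset_closure (fun z hz => huv z hz.1 fun hzc => hz.2 ⟨hz.1, hzc⟩) hu hv
    sdiff_subset
    (subset_closure_sdiff_of_finite isOpen_ball (finite_uDisk_inter_preimage_critVals ha))

lemma exists_mem_hpClosure_eq_mul_calD [NeZero n] (ha : ∀ j, a j ∈ uDisk) (ha0 : ∃ i, a i = 0)
    (hp : 0 < p) (hf : MemHinf f) (hg : MemHinf g) :
    ∃ h ∈ hpClosure p (Algebra.adjoin ℂ {blaschke a, g} : Set (ℂ → ℂ)),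
      ∀ z ∈ uDisk, blaschke a z ∉ critVals a → h z = f z * calD a g z := by
  obtain ⟨i, hi⟩ := ha0
  choose c hc hceq using exists_memHinf_eqOn_coeff_fiberInterpPoly ha hf hg
  have hterm : ∀ k ∈ Finset.range n, (fun z => c k (blaschke a z) * g z ^ k) ∈
      hpClosureSubmodule hp (Subalgebra.toSubmodule (Algebra.adjoin ℂ {blaschke a, g}))
        fun _ hu => memHp_of_mem_adjoin_pair hp (memHinf_blaschke ha) hg hu := fun k _ =>
    comp_mul_pow_mem_hpClosure hp (hc k) (differentiableOn_blaschke ha) (mapsTo_blaschke ha)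
      (blaschke_zero hi) hg k
  refine ⟨_, Submodule.sum_mem _ hterm, fun z hz hzc => ?_⟩
  rw [Finset.sum_apply, ← sum_coeff_fiberInterpPoly_mul_pow ha f g hz hzc]
  exact Finset.sum_congr rfl fun k _ => by rw [hceq k ⟨mapsTo_blaschke ha hz, hzc⟩]

lemma exists_mem_zInvCore_eq_calD [NeZero n] (ha : ∀ j, a j ∈ uDisk) (ha0 : ∃ i, a i = 0)
    (hp : 0 < p) (hg : MemHinf g) :
    ∃ h ∈ zInvCore (hpClosure p (Algebra.adjoin ℂ {blaschke a, g} : Set (ℂ → ℂ))),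
      ∀ z ∈ uDisk, blaschke a z ∉ critVals a → h z = calD a g z := by
  choose H hH hHeq using fun m : ℕ =>
    exists_mem_hpClosure_eq_mul_calD ha ha0 hp (memHinf_id.pow m) hg
  have hcont : ∀ m, ContinuousOn (H m) uDisk := fun m => (hH m).1.1.continuousOn
  refine ⟨H 0, fun m => ?_, fun z hz hzc => by simp [hHeq 0 z hz hzc]⟩
  refine mem_hpClosure_congr hp
    (fun _ hu => memHp_of_mem_adjoin_pair hp (memHinf_blaschke ha) hg hu) (hH m) ?_
  exact eqOn_uDisk_of_forall_notMem_critVals ha (hcont m)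
    ((continuous_pow m).continuousOn.mul (hcont 0)) fun z hz hzc => by
      simp [hHeq m z hz hzc, hHeq 0 z hz hzc]

lemma isZInvSubspace_zInvCore_hpClosure_adjoin {F G : ℂ → ℂ} (hp : 0 < p) (hF : MemHinf F)
    (hG : MemHinf G) :
    IsZInvSubspace p (zInvCore (hpClosure p (Algebra.adjoin ℂ {F, G} : Set (ℂ → ℂ)))) := by
  have hadjoin : ∀ u ∈ Algebra.adjoin ℂ {F, G}, MemHp p u := fun _ hu =>
    memHp_of_mem_adjoin_pair hp hF hG hu
  exact isZInvSubspace_zInvCore hp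
    (V := hpClosureSubmodule hp (Subalgebra.toSubmodule (Algebra.adjoin ℂ {F, G})) hadjoin)
    (fun _ hu => hu.1) (hpClosure_hpClosure_subset hp hadjoin)

lemma calD_eq_zero_of_forall_isZInvSubspace [NeZero n] (ha : ∀ j, a j ∈ uDisk)
    (ha0 : ∃ i, a i = 0) (hp : 0 < p) (hg : MemHinf g)
    (htriv : ∀ M : Set (ℂ → ℂ), IsZInvSubspace p M →
      M ⊆ hpClosure p (Algebra.adjoin ℂ {blaschke a, g} : Set (ℂ → ℂ)) →
      ∀ f ∈ M, ∀ z ∈ uDisk, f z = 0) :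
    ∀ z ∈ uDisk, blaschke a z ∉ critVals a → calD a g z = 0 := by
  obtain ⟨h, hh, hheq⟩ := exists_mem_zInvCore_eq_calD ha ha0 hp hg
  intro z hz hzc
  rw [← hheq z hz hzc]
  exact htriv _ (isZInvSubspace_zInvCore_hpClosure_adjoin hp (memHinf_blaschke ha) hg)
    (zInvCore_subset _) h hh z hz

lemma eqOn_zero_of_isGamma_of_calD_eq_zero [NeZero n] (ha : ∀ j, a j ∈ uDisk) {Γg : ℂ → ℂ}
    (hΓg : IsGamma a g Γg) (hD : ∀ z ∈ uDisk, blaschke a z ∉ critVals a → calD a g z = 0) :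
    EqOn Γg 0 uDisk :=
  eqOn_uDisk_of_forall_notMem_critVals ha hΓg.1.continuousOn continuousOn_const
    fun z hz hzc => (mul_eq_zero.1 ((hΓg.2 z hz).trans (hD z hz hzc))).resolve_right
      (calD_id_ne_zero ha hz hzc)

end Nonvanishing

/-- **Theorem D′.** For `g ∈ H^∞` and `0 < p < ∞`, `Γ(g)` vanishes
identically on `𝔻` iff the only `z`-invariant subspace of `H^p` contained in the
`H^p`-closure of `ℂ[B,g]` is the trivial subspace `{0}`. -/
theorem stmt15 {n : ℕ} (hn : 2 ≤ n) (a : Fin n → ℂ) (ha : ∀ j, a j ∈ uDisk)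
    (ha0 : a ⟨0, by omega⟩ = 0)
    (g Γg : ℂ → ℂ) (hg : MemHinf g) (hΓg : IsGamma a g Γg)
    (p : ℝ) (hp : 0 < p) :
    (∀ z ∈ uDisk, Γg z = 0) ↔
      ∀ M : Set (ℂ → ℂ), IsZInvSubspace p M →
        M ⊆ hpClosure p (algGen2 (blaschke a) g) →
        ∀ f ∈ M, ∀ z ∈ uDisk, f z = 0 := by
  have : NeZero n := ⟨by omega⟩
  rw [algGen2_eq_adjoin]
  constructor
  · intro hΓ M hM hMs f hf
    have hD : ∀ z ∈ uDisk, calD a g z = 0 := fun z hz => by rw [← hΓg.2 z hz, hΓ z hz, zero_mul]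
    exact eqOn_zero_of_mem_isZInvSubspace ha hg hp hD hM hMs hf
  · intro htriv
    exact eqOn_zero_of_isGamma_of_calD_eq_zero ha hΓg
      (calD_eq_zero_of_forall_isZInvSubspace ha ⟨_, ha0⟩ hp hg htriv)
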